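/- arXiv:1503.08082 — 2 statements merged into one kernel-verified Lean document; each statement's English description precedes it below -/
import Mathlib

section
/- Fix t > 0, ξ > 0, y₀ > 0, p < 1 and k > 0. Set β_p := 1/(3-2p), ȳ_p := (k²ξ²t(1-p)/2)^{β_p}, f₀(y) := k²/(2y) + y^{2(1-p)}/(2ξ²t(1-p)²) and f₁(y) := (y·y₀)^{1-p}/(ξ²t(1-p)²). Then as τ → 0⁺: C(k,τ) = exp( -f₀(ȳ_p)·τ^{β_p - 1} + f₁(ȳ_p)·τ^{(β_p - 1)/2} ) · c₅ · τ^{(6-5p)/(6-4p)} · (1 + O(τ^{(1-β_p)/2})), where c₅ := y₀^{p/2}·ȳ_p^{3(1-p)/2}·exp( k/2 - y₀^{2(1-p)}/(2ξ²t(1-p)²) + f₁'(ȳ_p)²/(2·f₀''(ȳ_p)) ) / ( k²·ξ·√(2π·f₀''(ȳ_p)·t) ), and f₁', f₀'' denote the first derivative of f₁ and second derivative of f₀. -/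
/-- The standard normal cumulative distribution function. -/
noncomputable def Phi (x : ℝ) : ℝ :=
  ∫ s in Set.Iic x, Real.exp (-(s ^ 2) / 2) / Real.sqrt (2 * Real.pi)

/-- The Black–Scholes call price. -/
noncomputable def BS (k w T : ℝ) : ℝ :=
  Phi (-k / Real.sqrt (w * T) + Real.sqrt (w * T) / 2)
    - Real.exp k * Phi (-k / Real.sqrt (w * T) - Real.sqrt (w * T) / 2)

/-- The modified Bessel function of the first kind of order `ν`. -/
noncomputable def besselI (ν x : ℝ) : ℝ :=
  ∑' m : ℕ, (x / 2) ^ (2 * (m : ℝ) + ν) / ((m.factorial : ℝ) * Real.Gamma ((m : ℝ) + ν + 1))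

open Real Set Filter Topology MeasureTheory

lemma phi_integrable : Integrable (fun s : ℝ => Real.exp (-(s ^ 2) / 2) / Real.sqrt (2 * Real.pi)) := by
  have h := (integrable_exp_neg_mul_sq (b := 1/2) (by norm_num)).div_const (Real.sqrt (2 * Real.pi))
  refine h.congr (ae_of_all _ fun x => ?_)
  show _ = _
  simp only
  congr 2; ring

lemma Phi_eq (x : ℝ) : Phi x = Phi 0 + ∫ s in (0:ℝ)..x, Real.exp (-(s ^ 2) / 2) / Real.sqrt (2 * Real.pi) := by
  unfold Phi
  rw [← intervalIntegral.integral_Iic_sub_Iic phi_integrable.integrableOn phi_integrable.integrableOn]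
  ring

lemma Phi_hasDerivAt (x : ℝ) : HasDerivAt Phi (Real.exp (-(x ^ 2) / 2) / Real.sqrt (2 * Real.pi)) x := by
  have h : HasDerivAt (fun x => Phi 0 + ∫ s in (0:ℝ)..x, Real.exp (-(s ^ 2) / 2) / Real.sqrt (2 * Real.pi))
      (Real.exp (-(x ^ 2) / 2) / Real.sqrt (2 * Real.pi)) x := by
    apply HasDerivAt.const_add
    have hc : Continuous (fun s : ℝ => Real.exp (-(s ^ 2) / 2) / Real.sqrt (2 * Real.pi)) := by fun_prop
    exact hc.integral_hasStrictDerivAt 0 x |>.hasDerivAt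
  have e : Phi = (fun x => Phi 0 + ∫ s in (0:ℝ)..x, Real.exp (-(s ^ 2) / 2) / Real.sqrt (2 * Real.pi)) :=
    funext Phi_eq
  rw [e]; exact h

lemma Phi_continuous : Continuous Phi :=
  continuous_iff_continuousAt.2 fun x => (Phi_hasDerivAt x).continuousAt

lemma Phi_atBot : Tendsto Phi atBot (𝓝 0) := by
  have h := intervalIntegral_tendsto_integral_Iic (f := fun s : ℝ => Real.exp (-(s ^ 2) / 2) / Real.sqrt (2 * Real.pi))
    (μ := volume) 0 phi_integrable.integrableOn (tendsto_id)
  have e : Phi = fun x => Phi 0 - ∫ s in x..(0:ℝ), Real.exp (-(s ^ 2) / 2) / Real.sqrt (2 * Real.pi) := by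
    funext x; rw [Phi_eq x, intervalIntegral.integral_symm]; ring
  rw [e]
  have h2 := h.const_sub (Phi 0)
  have e2 : Phi 0 - ∫ s in Iic (0:ℝ), Real.exp (-(s ^ 2) / 2) / Real.sqrt (2 * Real.pi) = 0 := by
    simp [Phi]
  rw [e2] at h2
  exact h2

lemma nonneg_of_deriv {f f' : ℝ → ℝ} (hf : ∀ s, 0 < s → HasDerivAt f (f' s) s)
    (hf' : ∀ s, 0 < s → 0 ≤ f' s) (hl : Tendsto f (𝓝[>] 0) (𝓝 0)) (s : ℝ) (hs : 0 < s) : 0 ≤ f s := by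
  have hm : MonotoneOn f (Ioi 0) := by
    apply monotoneOn_of_deriv_nonneg (convex_Ioi 0)
    · exact fun x hx => (hf x hx).continuousAt.continuousWithinAt
    · intro x hx; rw [interior_Ioi] at hx; exact (hf x hx).differentiableAt.differentiableWithinAt
    · intro x hx; rw [interior_Ioi] at hx; rw [(hf x hx).deriv]; exact hf' x hx
  refine le_of_tendsto hl ?_
  filter_upwards [Ioo_mem_nhdsGT hs] with x hx
  exact hm hx.1 hs hx.2.le

noncomputable def bsd (k s : ℝ) : ℝ :=
  Phi (-k / Real.sqrt s + Real.sqrt s / 2) - Real.exp k * Phi (-k / Real.sqrt s - Real.sqrt s / 2)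

lemma bsd_hasDerivAt (k s : ℝ) (hs : 0 < s) : HasDerivAt (bsd k)
    (Real.exp (k/2) / Real.sqrt (2 * Real.pi) * (Real.exp (-k^2/(2*s)) / (2 * Real.sqrt s)) * Real.exp (-s/8)) s := by
  have hq : HasDerivAt Real.sqrt (1 / (2 * Real.sqrt s)) s := Real.hasDerivAt_sqrt hs.ne'
  have hr : 0 < Real.sqrt s := Real.sqrt_pos.2 hs
  have hsq : Real.sqrt s ^ 2 = s := Real.sq_sqrt hs.le
  have h1 := (((hasDerivAt_const s (-k)).div hq hr.ne').add (hq.div_const 2))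
  have h2 := (((hasDerivAt_const s (-k)).div hq hr.ne').sub (hq.div_const 2))
  have h3 := ((Phi_hasDerivAt _).comp s h1).sub (((Phi_hasDerivAt _).comp s h2).const_mul (Real.exp k))
  refine h3.congr_deriv ?_
  simp only [Pi.div_apply, Pi.add_apply, Pi.sub_apply]
  set r := Real.sqrt s
  have e1 : Real.exp (-((-k / r + r / 2) ^ 2) / 2) = Real.exp (k/2) * Real.exp (-k^2/(2*s)) * Real.exp (-s/8) := by
    rw [← Real.exp_add, ← Real.exp_add, ← hsq]; congr 1; field_simp; ring
  have e2 : Real.exp k * Real.exp (-((-k / r - r / 2) ^ 2) / 2) = Real.exp (k/2) * Real.exp (-k^2/(2*s)) * Real.exp (-s/8) := by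
    rw [← Real.exp_add, ← Real.exp_add, ← Real.exp_add, ← hsq]; congr 1; field_simp; ring
  rw [e1, mul_comm, mul_comm (_ / _) ((0 * r - _) / _ - _), mul_left_comm, ← mul_div_assoc (Real.exp k), e2]
  field_simp
  ring

lemma bsd_tendsto (k : ℝ) (hk : 0 < k) : Tendsto (bsd k) (𝓝[>] 0) (𝓝 0) := by
  have hs : Tendsto Real.sqrt (𝓝[>] 0) (𝓝[>] 0) := by
    apply tendsto_nhdsWithin_of_tendsto_nhds_of_eventually_within
    · have := (Real.continuous_sqrt.tendsto 0); rw [Real.sqrt_zero] at this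
      exact this.mono_left nhdsWithin_le_nhds
    · filter_upwards [self_mem_nhdsWithin] with x hx using Real.sqrt_pos.2 hx
  have hA : Tendsto (fun s => -k / Real.sqrt s) (𝓝[>] 0) atBot := by
    have := (tendsto_inv_nhdsGT_zero.comp hs).const_mul_atTop_of_neg (neg_lt_zero.2 hk)
    exact this.congr fun x => by simp [div_eq_mul_inv]
  have hs0 : Tendsto (fun s => Real.sqrt s / 2) (𝓝[>] 0) (𝓝 0) := by
    simpa using (hs.mono_right nhdsWithin_le_nhds).div_const 2
  have a1 := Phi_atBot.comp (hA.atBot_add hs0)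
  have a2 := Phi_atBot.comp (hA.atBot_add hs0.neg)
  have := a1.sub (a2.const_mul (Real.exp k))
  simp only [mul_zero, sub_zero] at this
  exact this.congr fun x => by simp [bsd, sub_eq_add_neg]

lemma bsW_hasDerivAt (k s : ℝ) (hs : 0 < s) : HasDerivAt (fun s => s * Real.sqrt s * Real.exp (-k^2/(2*s)))
    (Real.exp (-k^2/(2*s)) / (2 * Real.sqrt s) * (3 * s + k^2)) s := by
  have hq : HasDerivAt Real.sqrt (1 / (2 * Real.sqrt s)) s := Real.hasDerivAt_sqrt hs.ne'
  have hr : 0 < Real.sqrt s := Real.sqrt_pos.2 hs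
  have hsq : Real.sqrt s ^ 2 = s := Real.sq_sqrt hs.le
  have h1 := ((hasDerivAt_const s (-k^2)).div ((hasDerivAt_id s).const_mul 2) (by simpa using hs.ne')).exp
  have h2 := ((hasDerivAt_id s).mul hq).mul h1
  refine h2.congr_deriv ?_
  simp only [Pi.div_apply, Pi.mul_apply, id]
  set r := Real.sqrt s
  set E := Real.exp (-k^2/(2*s))
  rw [← hsq]; field_simp; ring

lemma bsW_tendsto (k : ℝ) : Tendsto (fun s => s * Real.sqrt s * Real.exp (-k^2/(2*s))) (𝓝[>] 0) (𝓝 0) := by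
  have h1 : Tendsto (fun s : ℝ => s * Real.sqrt s) (𝓝[>] 0) (𝓝 0) := by
    have : Continuous (fun s : ℝ => s * Real.sqrt s) := by fun_prop
    have := this.tendsto 0
    simp only [zero_mul] at this
    exact this.mono_left nhdsWithin_le_nhds
  refine squeeze_zero' ?_ ?_ h1
  · filter_upwards [self_mem_nhdsWithin] with x hx
    have hx : (0:ℝ) < x := hx
    positivity
  · filter_upwards [self_mem_nhdsWithin] with x hx
    have hx : (0:ℝ) < x := hx
    have : Real.exp (-k^2/(2*x)) ≤ 1 := by
      rw [Real.exp_le_one_iff]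
      rw [neg_div]; have : 0 ≤ k^2/(2*x) := by positivity
      linarith
    exact mul_le_of_le_one_right (by positivity) this

lemma bs_bounds (k : ℝ) (hk : 0 < k) (s : ℝ) (hs : 0 < s) :
    0 ≤ bsd k s ∧
    bsd k s ≤ Real.exp (k/2) / Real.sqrt (2 * Real.pi) / k^2 * (s * Real.sqrt s * Real.exp (-k^2/(2*s))) ∧
    Real.exp (k/2) / Real.sqrt (2 * Real.pi) / k^2 * (s * Real.sqrt s * Real.exp (-k^2/(2*s))) * (1 - (3/k^2+1/8) * s) ≤ bsd k s := by
  set D := Real.exp (k/2) / Real.sqrt (2 * Real.pi) with hD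
  have hDp : 0 < D := by positivity
  refine ⟨?_, ?_, ?_⟩
  · refine nonneg_of_deriv (bsd_hasDerivAt k) (fun s hs => by positivity) (bsd_tendsto k hk) s hs
  · rw [← sub_nonneg]
    have := nonneg_of_deriv (f := fun s => D / k^2 * (s * Real.sqrt s * Real.exp (-k^2/(2*s))) - bsd k s)
      (fun s hs => ((bsW_hasDerivAt k s hs).const_mul (D / k^2)).sub (bsd_hasDerivAt k s hs)) ?_ ?_ s hs
    · exact this
    · intro s hs
      have h8 : Real.exp (-s/8) ≤ 1 := by rw [Real.exp_le_one_iff]; linarith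
      have e : D / k ^ 2 * (Real.exp (-k^2/(2*s)) / (2 * Real.sqrt s) * (3 * s + k ^ 2)) - D * (Real.exp (-k^2/(2*s)) / (2 * Real.sqrt s)) * Real.exp (-s / 8)
        = D * (Real.exp (-k^2/(2*s)) / (2 * Real.sqrt s)) * (3 * s / k^2 + (1 - Real.exp (-s/8))) := by
        field_simp; ring
      rw [e]
      have : 0 ≤ 1 - Real.exp (-s/8) := by linarith
      positivity
    · simpa using ((bsW_tendsto k).const_mul (D/k^2)).sub (bsd_tendsto k hk)
  · rw [← sub_nonneg]
    have := nonneg_of_deriv (f := fun s => bsd k s - D / k^2 * (s * Real.sqrt s * Real.exp (-k^2/(2*s))) * (1 - (3/k^2+1/8) * s))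
      (fun s hs => (bsd_hasDerivAt k s hs).sub (((bsW_hasDerivAt k s hs).const_mul (D / k^2)).mul
        (((hasDerivAt_id s).const_mul (3/k^2+1/8)).const_sub 1))) ?_ ?_ s hs
    · exact this
    · intro s hs
      have h8 : 1 - s/8 ≤ Real.exp (-s/8) := by have := Real.add_one_le_exp (-s/8); linarith
      have hr : 0 < Real.sqrt s := Real.sqrt_pos.2 hs
      have hsq : Real.sqrt s ^ 2 = s := Real.sq_sqrt hs.le
      simp only [id]
      have e : s * Real.sqrt s * Real.exp (-k^2/(2*s)) = (Real.exp (-k^2/(2*s)) / (2 * Real.sqrt s)) * (2 * s^2) := by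
        field_simp; rw [hsq]
      rw [e]
      set Q := Real.exp (-k^2/(2*s)) / (2 * Real.sqrt s)
      have hQ : 0 < Q := by positivity
      have e2 : D * Q * Real.exp (-s / 8) - (D / k ^ 2 * (Q * (3 * s + k ^ 2)) * (1 - (3 / k ^ 2 + 1 / 8) * s) + D / k ^ 2 * (Q * (2 * s ^ 2)) * -((3 / k ^ 2 + 1 / 8) * 1))
        = D * Q * ((Real.exp (-s/8) - (1 - s/8)) + (3/k^2+1/8) * (5 * s^2)/k^2) := by
        field_simp; ring
      rw [e2]
      have : 0 ≤ Real.exp (-s/8) - (1 - s/8) := by linarith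
      positivity
    · have hl : Tendsto (fun s : ℝ => 1 - (3/k^2+1/8) * s) (𝓝[>] 0) (𝓝 1) := by
        have : Continuous (fun s : ℝ => 1 - (3/k^2+1/8) * s) := by fun_prop
        have := this.tendsto 0
        simp only [mul_zero, sub_zero] at this
        exact this.mono_left nhdsWithin_le_nhds
      simpa using (bsd_tendsto k hk).sub (((bsW_tendsto k).const_mul (D/k^2)).mul hl)

lemma beta_real (a b : ℝ) (ha : 0 < a) (hb : 0 < b) :
    IntegrableOn (fun x : ℝ => x ^ (a - 1) * (1 - x) ^ (b - 1)) (Ioo 0 1) ∧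
    ∫ x in Ioo (0:ℝ) 1, x ^ (a - 1) * (1 - x) ^ (b - 1) = Real.Gamma a * Real.Gamma b / Real.Gamma (a + b) := by
  have h := ProbabilityTheory.lintegral_betaPDF_eq_one ha hb
  rw [ProbabilityTheory.lintegral_betaPDF] at h
  have hB : 0 < ProbabilityTheory.beta a b := ProbabilityTheory.beta_pos ha hb
  have hmeas : Measurable (fun x : ℝ => 1 / ProbabilityTheory.beta a b * x ^ (a - 1) * (1 - x) ^ (b - 1)) := by
    fun_prop
  have hnn : 0 ≤ᵐ[volume.restrict (Ioo (0:ℝ) 1)] (fun x : ℝ => 1 / ProbabilityTheory.beta a b * x ^ (a - 1) * (1 - x) ^ (b - 1)) := by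
    filter_upwards [ae_restrict_mem measurableSet_Ioo] with x hx
    have h1 := hx.1
    have h2 : 0 < 1 - x := by linarith [hx.2]
    show (0:ℝ) ≤ _
    positivity
  have hi : ∫ x in Ioo (0:ℝ) 1, 1 / ProbabilityTheory.beta a b * x ^ (a - 1) * (1 - x) ^ (b - 1) = 1 := by
    rw [integral_eq_lintegral_of_nonneg_ae hnn hmeas.aestronglyMeasurable, h]; simp
  have hint : IntegrableOn (fun x : ℝ => 1 / ProbabilityTheory.beta a b * x ^ (a - 1) * (1 - x) ^ (b - 1)) (Ioo (0:ℝ) 1) := by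
    by_contra hc
    rw [integral_undef hc] at hi
    norm_num at hi
  have e : (fun x : ℝ => x ^ (a - 1) * (1 - x) ^ (b - 1)) = fun x => ProbabilityTheory.beta a b * (1 / ProbabilityTheory.beta a b * x ^ (a - 1) * (1 - x) ^ (b - 1)) := by
    funext x; field_simp
  rw [e]
  refine ⟨hint.const_mul _, ?_⟩
  rw [integral_const_mul, hi, mul_one]; rfl

lemma bessel_beta (μ : ℝ) (hμ : -1 < μ) (m : ℕ) :
    IntegrableOn (fun v : ℝ => (v * (1 - v)) ^ μ * (1 - 2 * v) ^ (2 * m)) (Ioo 0 (1/2)) ∧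
    (4:ℝ) ^ (μ + 1) * ∫ v in Ioo (0:ℝ) (1/2), (v * (1 - v)) ^ μ * (1 - 2 * v) ^ (2 * m)
      = Real.Gamma (m + 1/2) * Real.Gamma (μ + 1) / Real.Gamma (m + μ + 3/2) := by
  obtain ⟨h1, h2⟩ := beta_real (m + 1/2) (μ + 1) (by positivity) (by linarith)
  have himg : (fun v : ℝ => (1 - 2 * v) ^ 2) '' Ioo 0 (1/2) = Ioo 0 1 := by
    ext w; constructor
    · rintro ⟨v, hv, rfl⟩
      constructor
      · have : 0 < 1 - 2 * v := by linarith [hv.2]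
        positivity
      · show (1 - 2 * v)^2 < 1
        nlinarith [hv.1, hv.2]
    · intro hw
      have hs0 : 0 < Real.sqrt w := Real.sqrt_pos.2 hw.1
      have hs1 : Real.sqrt w < 1 := by rw [Real.sqrt_lt' one_pos]; simpa using hw.2
      refine ⟨(1 - Real.sqrt w)/2, ⟨by linarith, by linarith⟩, ?_⟩
      have : 1 - 2 * ((1 - Real.sqrt w)/2) = Real.sqrt w := by ring
      simp only [this]
      exact Real.sq_sqrt hw.1.le
  have hd : ∀ v ∈ Ioo (0:ℝ) (1/2), HasDerivWithinAt (fun v : ℝ => (1 - 2 * v) ^ 2) (2 * (1 - 2 * v) * (-2)) (Ioo 0 (1/2)) v := by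
    intro v hv
    have := (((hasDerivAt_id v).const_mul 2).const_sub 1).pow 2
    refine (this.congr_deriv ?_).hasDerivWithinAt
    simp
  have hinj : InjOn (fun v : ℝ => (1 - 2 * v) ^ 2) (Ioo 0 (1/2)) := by
    intro a ha b hb hab
    simp only at hab
    have := (sq_eq_sq₀ (by linarith [ha.2]) (by linarith [hb.2])).1 hab
    linarith
  have key : ∀ v ∈ Ioo (0:ℝ) (1/2), |2 * (1 - 2 * v) * (-2)| • (((1 - 2 * v) ^ 2) ^ ((m:ℝ) + 1/2 - 1) * (1 - (1 - 2 * v) ^ 2) ^ (μ + 1 - 1))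
      = (4:ℝ) ^ (μ + 1) * ((v * (1 - v)) ^ μ * (1 - 2 * v) ^ (2 * m)) := by
    intro v hv
    have hp : 0 < 1 - 2 * v := by linarith [hv.2]
    have hq : 0 < v * (1 - v) := mul_pos hv.1 (by linarith [hv.2])
    have a1 : |2 * (1 - 2 * v) * (-2)| = 4 * (1 - 2 * v) := by
      rw [abs_of_neg (by linarith)]; ring
    have a2 : 1 - (1 - 2 * v)^2 = 4 * (v * (1 - v)) := by ring
    have a3 : ((1 - 2 * v) ^ 2) ^ ((m:ℝ) + 1/2 - 1) = (1 - 2 * v) ^ (2 * m) / (1 - 2 * v) := by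
      rw [← Real.rpow_natCast (1 - 2 * v) 2, ← Real.rpow_mul hp.le, ← Real.rpow_natCast (1 - 2 * v) (2 * m),
        ← Real.rpow_sub_one hp.ne']
      congr 1; push_cast; ring
    rw [a1, a2, a3, add_sub_cancel_right, Real.mul_rpow (by norm_num) hq.le, Real.rpow_add_one (by norm_num), smul_eq_mul]
    field_simp
  have i1 := (integrableOn_image_iff_integrableOn_abs_deriv_smul measurableSet_Ioo hd hinj (fun x : ℝ => x ^ ((m:ℝ) + 1/2 - 1) * (1 - x) ^ (μ + 1 - 1)))
  have i2 := (integral_image_eq_integral_abs_deriv_smul measurableSet_Ioo hd hinj (fun x : ℝ => x ^ ((m:ℝ) + 1/2 - 1) * (1 - x) ^ (μ + 1 - 1)))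
  rw [himg] at i1 i2
  have i1 := i1.1 h1
  rw [integrableOn_congr_fun key measurableSet_Ioo] at i1
  rw [setIntegral_congr_fun measurableSet_Ioo key, h2, integral_const_mul] at i2
  have h4 : (0:ℝ) < 4 ^ (μ + 1) := by positivity
  refine ⟨?_, ?_⟩
  · have := i1.const_mul ((4:ℝ) ^ (μ + 1))⁻¹
    refine this.congr (ae_of_all _ fun x => ?_)
    simp only
    field_simp
  · rw [← i2]; congr 2; ring

lemma bessel_hasSum (ν x : ℝ) (hν : 0 < ν) (hx : 0 < x) :
    HasSum (fun m : ℕ => (x / 2) ^ (2 * (m : ℝ) + ν) / ((m.factorial : ℝ) * Real.Gamma ((m : ℝ) + ν + 1)))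
      ((x/2)^ν / (Real.sqrt π * Real.Gamma (ν + 1/2)) * (4:ℝ) ^ (ν + 1/2) *
        ∫ v in Ioo (0:ℝ) (1/2), (v * (1 - v)) ^ (ν - 1/2) * Real.cosh (x * (1 - 2 * v))) := by
  set μ := ν - 1/2 with hμ
  have hμ1 : -1 < μ := by linarith
  set F : ℕ → ℝ → ℝ := fun m v => x ^ (2 * m) / ((2 * m).factorial : ℝ) * ((v * (1 - v)) ^ μ * (1 - 2 * v) ^ (2 * m)) with hF
  have hFi : ∀ m, Integrable (F m) (volume.restrict (Ioo (0:ℝ) (1/2))) := fun m =>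
    (bessel_beta μ hμ1 m).1.const_mul _
  have hnn : ∀ m, ∀ v ∈ Ioo (0:ℝ) (1/2), 0 ≤ F m v := by
    intro m v hv
    have hp : 0 < 1 - 2 * v := by linarith [hv.2]
    have hq : 0 < v * (1 - v) := mul_pos hv.1 (by linarith [hv.2])
    simp only [hF]; positivity
  have hsumm : Summable (fun m => ∫ v in Ioo (0:ℝ) (1/2), ‖F m v‖) := by
    refine Summable.of_nonneg_of_le (fun m => integral_nonneg fun v => norm_nonneg _) (fun m => ?_)
      ((Real.hasSum_cosh x).summable.mul_right (∫ v in Ioo (0:ℝ) (1/2), (v * (1 - v)) ^ μ * (1 - 2 * v) ^ (2 * 0)))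
    rw [← integral_const_mul]
    refine setIntegral_mono_on (hFi m).norm ((bessel_beta μ hμ1 0).1.const_mul _) measurableSet_Ioo ?_
    intro v hv
    rw [Real.norm_of_nonneg (hnn m v hv)]
    have hp : 0 < 1 - 2 * v := by linarith [hv.2]
    have hq : 0 < v * (1 - v) := mul_pos hv.1 (by linarith [hv.2])
    have : (1 - 2 * v) ^ (2 * m) ≤ 1 := pow_le_one₀ hp.le (by linarith [hv.1])
    simp only [hF, mul_zero, pow_zero]
    gcongr
  have hs := hasSum_integral_of_summable_integral_norm hFi hsumm
  have e1 : ∫ v in Ioo (0:ℝ) (1/2), (∑' m, F m v) = ∫ v in Ioo (0:ℝ) (1/2), (v * (1 - v)) ^ μ * Real.cosh (x * (1 - 2 * v)) := by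
    refine setIntegral_congr_fun measurableSet_Ioo fun v hv => ?_
    have := (Real.hasSum_cosh (x * (1 - 2 * v))).mul_left ((v * (1 - v)) ^ μ)
    rw [← this.tsum_eq]
    refine tsum_congr fun m => ?_
    simp only [hF, mul_pow]; ring
  rw [e1] at hs
  have hs2 := hs.mul_left ((x/2)^ν / (Real.sqrt π * Real.Gamma (ν + 1/2)) * (4:ℝ) ^ (ν + 1/2))
  refine hs2.congr_fun ?_
  intro m
  simp only [hF]
  rw [integral_const_mul]
  have hb := (bessel_beta μ hμ1 m).2
  have e2 : μ + 1 = ν + 1/2 := by rw [hμ]; ring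
  have e3 : (m:ℝ) + μ + 3/2 = m + ν + 1 := by rw [hμ]; ring
  rw [e2, e3] at hb
  have hdup := Real.Gamma_mul_Gamma_add_half ((m:ℝ) + 1/2)
  have e4 : (m:ℝ) + 1/2 + 1/2 = m + 1 := by ring
  have e5 : 2 * ((m:ℝ) + 1/2) = ((2 * m : ℕ) : ℝ) + 1 := by push_cast; ring
  rw [e4, e5, Real.Gamma_nat_eq_factorial, Real.Gamma_nat_eq_factorial] at hdup
  have e6 : (2:ℝ) ^ (1 - (((2 * m : ℕ) : ℝ) + 1)) = (2 ^ (2 * m))⁻¹ := by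
    rw [← Real.rpow_natCast, ← Real.rpow_neg (by norm_num)]; congr 1; ring
  rw [e6] at hdup
  have e7 : (x/2) ^ (2 * (m:ℝ) + ν) = (x ^ (2 * m) / 2 ^ (2 * m)) * (x/2)^ν := by
    rw [Real.rpow_add (by positivity), ← div_pow, ← Real.rpow_natCast]; push_cast; rfl
  rw [e7]
  have g1 : 0 < Real.Gamma ((m:ℝ) + ν + 1) := Real.Gamma_pos_of_pos (by positivity)
  have g2 : 0 < Real.Gamma (ν + 1/2) := Real.Gamma_pos_of_pos (by positivity)
  have g3 : 0 < Real.Gamma ((m:ℝ) + 1/2) := Real.Gamma_pos_of_pos (by positivity)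
  have g4 : (0:ℝ) < (m.factorial : ℝ) := by positivity
  have g5 : (0:ℝ) < ((2*m).factorial : ℝ) := by positivity
  have g6 : 0 < Real.sqrt π := Real.sqrt_pos.2 Real.pi_pos
  set I := ∫ v in Ioo (0:ℝ) (1/2), (v * (1 - v)) ^ μ * (1 - 2 * v) ^ (2 * m)
  calc (x ^ (2 * m) / 2 ^ (2 * m)) * (x/2)^ν / ((m.factorial : ℝ) * Real.Gamma ((m:ℝ) + ν + 1))
      = (x/2)^ν / (Real.sqrt π * Real.Gamma (ν + 1/2)) * (x ^ (2 * m) / ((2 * m).factorial : ℝ)) * (((2*m).factorial : ℝ) * (2 ^ (2 * m))⁻¹ * √π) * (Real.Gamma (ν + 1/2) / Real.Gamma ((m:ℝ) + ν + 1) / m.factorial) := by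
        field_simp
    _ = (x/2)^ν / (Real.sqrt π * Real.Gamma (ν + 1/2)) * (x ^ (2 * m) / ((2 * m).factorial : ℝ)) * (Real.Gamma ((m:ℝ) + 1/2) * Real.Gamma (ν + 1/2) / Real.Gamma ((m:ℝ) + ν + 1)) := by
        rw [← hdup]; field_simp
    _ = _ := by rw [← hb]; ring

lemma exists_M (μ : ℝ) : ∃ M : ℝ, 2 ≤ M ∧ ∀ v ∈ Ioo (0:ℝ) (1/2), |(1 - v) ^ μ - 1| ≤ M * v := by
  have hc : ContinuousOn (fun v : ℝ => μ * (1 - v) ^ (μ - 1) * (-1)) (Icc 0 (1/2)) := by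
    intro v hv
    have h0 : 1 - v ≠ 0 := by linarith [hv.2]
    apply ContinuousAt.continuousWithinAt
    have : ContinuousAt (fun v : ℝ => (1 - v) ^ (μ - 1)) v :=
      ContinuousAt.rpow_const (by fun_prop) (Or.inl h0)
    exact (continuousAt_const.mul this).mul continuousAt_const
  obtain ⟨C, hC⟩ := isCompact_Icc.exists_bound_of_continuousOn hc
  refine ⟨max C 2, le_max_right _ _, fun v hv => ?_⟩
  have := (convex_Icc (0:ℝ) (1/2)).norm_image_sub_le_of_norm_hasDerivWithin_le
    (f := fun v : ℝ => (1 - v) ^ μ) (f' := fun v : ℝ => μ * (1 - v) ^ (μ - 1) * (-1)) (C := C) ?_ hC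
    (x := 0) (y := v) ⟨le_rfl, by norm_num⟩ ⟨hv.1.le, hv.2.le⟩
  · simp only [sub_zero, Real.one_rpow, Real.norm_eq_abs] at this
    rw [abs_of_pos hv.1] at this
    exact this.trans (mul_le_mul_of_nonneg_right (le_max_left _ _) hv.1.le)
  · intro y hy
    have h0 : 1 - y ≠ 0 := by linarith [hy.2]
    have := ((hasDerivAt_id y).const_sub 1).rpow_const (p := μ) (Or.inl h0)
    refine (this.congr_deriv ?_).hasDerivWithinAt
    simp

lemma rpow_le_exp (s x : ℝ) (hs : 0 < s) (hx : 0 < x) : x ^ s ≤ s ^ s * Real.exp x := by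
  have h1 : x ≤ s * Real.exp (x / s) := by
    have := Real.add_one_le_exp (x / s)
    have h2 : x / s ≤ Real.exp (x/s) := by linarith
    rw [div_le_iff₀ hs] at h2; linarith
  calc x ^ s ≤ (s * Real.exp (x/s)) ^ s := Real.rpow_le_rpow hx.le h1 hs.le
    _ = s ^ s * Real.exp x := by
      rw [Real.mul_rpow hs.le (Real.exp_pos _).le, ← Real.exp_mul]; congr 2; field_simp

lemma gamma_integrable (a r : ℝ) (ha : 0 < a) (hr : 0 < r) :
    IntegrableOn (fun v : ℝ => v ^ (a - 1) * Real.exp (-(r * v))) (Ioi 0) := by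
  have h := Real.integral_rpow_mul_exp_neg_mul_Ioi ha hr
  by_contra hc
  rw [integral_undef hc] at h
  have h1 := Real.Gamma_pos_of_pos ha
  have : 0 < (1 / r) ^ a * Real.Gamma a := by positivity
  linarith

lemma J1_bound (μ M x : ℝ) (hμ : -1 < μ) (hx : 0 < x) (hM : 2 ≤ M)
    (hM2 : ∀ v ∈ Ioo (0:ℝ) (1/2), |(1 - v) ^ μ - 1| ≤ M * v) :
    |(∫ v in Ioo (0:ℝ) (1/2), (v * (1 - v)) ^ μ * Real.exp (-(2 * x * v))) - (1 / (2 * x)) ^ (μ + 1) * Real.Gamma (μ + 1)|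
      ≤ M * ((1 / (2 * x)) ^ (μ + 2) * Real.Gamma (μ + 2)) := by
  have g1 := gamma_integrable (μ + 1) (2 * x) (by linarith) (by linarith)
  have g2 := gamma_integrable (μ + 2) (2 * x) (by linarith) (by linarith)
  have e1 := Real.integral_rpow_mul_exp_neg_mul_Ioi (a := μ + 1) (r := 2 * x) (by linarith) (by linarith)
  have e2 := Real.integral_rpow_mul_exp_neg_mul_Ioi (a := μ + 2) (r := 2 * x) (by linarith) (by linarith)
  have e3 : μ + 1 - 1 = μ := by ring
  have e4 : μ + 2 - 1 = μ + 1 := by ring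
  rw [e3] at g1 e1
  rw [e4] at g2 e2
  set g : ℝ → ℝ := (Ioo (0:ℝ) (1/2)).indicator (fun v => (v * (1 - v)) ^ μ * Real.exp (-(2 * x * v))) with hg
  have hJ : ∫ v in Ioo (0:ℝ) (1/2), (v * (1 - v)) ^ μ * Real.exp (-(2 * x * v)) = ∫ v in Ioi (0:ℝ), g v := by
    rw [hg, setIntegral_indicator measurableSet_Ioo, inter_eq_right.2 Ioo_subset_Ioi_self]
  have hgm : Measurable g := by
    rw [hg]; exact Measurable.indicator (by fun_prop) measurableSet_Ioo
  have hb : ∀ v ∈ Ioi (0:ℝ), ‖g v - v ^ μ * Real.exp (-(2 * x * v))‖ ≤ M * (v ^ (μ + 1) * Real.exp (-(2 * x * v))) := by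
    intro v hv
    have hv : 0 < v := hv
    have er : v ^ (μ + 1) = v ^ μ * v := Real.rpow_add_one hv.ne' μ
    have hp : 0 < v ^ μ * Real.exp (-(2 * x * v)) := by positivity
    rw [er]
    by_cases h : v ∈ Ioo (0:ℝ) (1/2)
    · rw [hg, indicator_of_mem h, Real.mul_rpow hv.le (by linarith [h.2])]
      have : v ^ μ * (1 - v) ^ μ * Real.exp (-(2 * x * v)) - v ^ μ * Real.exp (-(2 * x * v))
        = (v ^ μ * Real.exp (-(2 * x * v))) * ((1 - v) ^ μ - 1) := by ring
      rw [this, norm_mul, Real.norm_of_nonneg hp.le, Real.norm_eq_abs]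
      calc _ ≤ (v ^ μ * Real.exp (-(2 * x * v))) * (M * v) := mul_le_mul_of_nonneg_left (hM2 v h) hp.le
        _ = _ := by ring
    · rw [hg, indicator_of_notMem h, zero_sub, norm_neg, Real.norm_of_nonneg hp.le]
      have h2 : 1/2 ≤ v := by by_contra hc; exact h ⟨hv, by linarith⟩
      have : 1 ≤ M * v := by nlinarith
      calc _ = (v ^ μ * Real.exp (-(2 * x * v))) * 1 := by ring
        _ ≤ (v ^ μ * Real.exp (-(2 * x * v))) * (M * v) := mul_le_mul_of_nonneg_left this hp.le
        _ = _ := by ring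
  have hdi : IntegrableOn (fun v => g v - v ^ μ * Real.exp (-(2 * x * v))) (Ioi 0) := by
    refine Integrable.mono' (g2.const_mul M) ?_ ?_
    · exact (hgm.sub (by fun_prop)).aestronglyMeasurable
    · filter_upwards [ae_restrict_mem measurableSet_Ioi] with v hv using hb v hv
  have hgi : IntegrableOn g (Ioi 0) := by
    have := hdi.add g1
    refine this.congr (ae_of_all _ fun v => ?_)
    simp
  rw [hJ, ← e1, ← integral_sub hgi g1, ← e2, ← integral_const_mul, ← Real.norm_eq_abs]
  refine norm_integral_le_of_norm_le (g2.const_mul M) ?_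
  filter_upwards [ae_restrict_mem measurableSet_Ioi] with v hv using hb v hv

lemma bessel_asymp (ν : ℝ) (hν : 0 < ν) : ∃ K > 0, ∀ x > 0,
    |besselI ν x * Real.sqrt (2 * π * x) * Real.exp (-x) - 1| ≤ K / x := by
  set μ := ν - 1/2 with hμ
  have hμ1 : -1 < μ := by linarith
  obtain ⟨M, hM, hM2⟩ := exists_M μ
  set c0 := ∫ v in Ioo (0:ℝ) (1/2), (v * (1 - v)) ^ μ with hc0
  have hc0i : IntegrableOn (fun v : ℝ => (v * (1 - v)) ^ μ) (Ioo 0 (1/2)) := by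
    simpa using (bessel_beta μ hμ1 0).1
  have hwnn : ∀ v ∈ Ioo (0:ℝ) (1/2), 0 ≤ (v * (1 - v)) ^ μ := by
    intro v hv
    have hq : 0 < v * (1 - v) := mul_pos hv.1 (by linarith [hv.2])
    positivity
  have hc0n : 0 ≤ c0 := setIntegral_nonneg measurableSet_Ioo hwnn
  have hG : 0 < Real.Gamma (μ + 1) := Real.Gamma_pos_of_pos (by linarith)
  have hμ2 : 0 < μ + 2 := by linarith
  have hμ1' : 0 < μ + 1 := by linarith
  refine ⟨M * (μ + 1) / 2 + c0 / Real.Gamma (μ + 1) * 2 ^ (μ + 1) * (μ + 2) ^ (μ + 2), by positivity, ?_⟩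
  intro x hx
  have hB : besselI ν x = _ := (bessel_hasSum ν x hν hx).tsum_eq
  rw [← hμ] at hB
  have e1 : ν + 1/2 = μ + 1 := by rw [hμ]; ring
  rw [e1] at hB
  set J1 := ∫ v in Ioo (0:ℝ) (1/2), (v * (1 - v)) ^ μ * Real.exp (-(2 * x * v)) with hJ1
  set J2 := ∫ v in Ioo (0:ℝ) (1/2), (v * (1 - v)) ^ μ * Real.exp (-(2 * x * (1 - v))) with hJ2
  have bdd : ∀ (h : ℝ → ℝ) (c : ℝ), Measurable h → (∀ v ∈ Ioo (0:ℝ) (1/2), |h v| ≤ c) →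
      IntegrableOn (fun v : ℝ => (v * (1 - v)) ^ μ * h v) (Ioo 0 (1/2)) := by
    intro h c hm hh
    refine Integrable.mono' (hc0i.mul_const c) ((by fun_prop : Measurable _)).aestronglyMeasurable ?_
    filter_upwards [ae_restrict_mem measurableSet_Ioo] with v hv
    rw [norm_mul, Real.norm_of_nonneg (hwnn v hv)]
    exact mul_le_mul_of_nonneg_left (hh v hv) (hwnn v hv)
  have i1 : IntegrableOn (fun v : ℝ => (v * (1 - v)) ^ μ * Real.exp (-(2 * x * v))) (Ioo 0 (1/2)) := by
    refine bdd _ 1 (by fun_prop) fun v hv => ?_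
    rw [abs_of_pos (Real.exp_pos _), Real.exp_le_one_iff]
    have := hv.1
    have : 0 < 2 * x * v := by positivity
    linarith
  have hle2 : ∀ v ∈ Ioo (0:ℝ) (1/2), Real.exp (-(2 * x * (1 - v))) ≤ Real.exp (-x) := by
    intro v hv
    rw [Real.exp_le_exp]; nlinarith [hv.2]
  have i2 : IntegrableOn (fun v : ℝ => (v * (1 - v)) ^ μ * Real.exp (-(2 * x * (1 - v)))) (Ioo 0 (1/2)) := by
    refine bdd _ (Real.exp (-x)) (by fun_prop) fun v hv => ?_
    rw [abs_of_pos (Real.exp_pos _)]; exact hle2 v hv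
  have hI : (∫ v in Ioo (0:ℝ) (1/2), (v * (1 - v)) ^ μ * Real.cosh (x * (1 - 2 * v))) * Real.exp (-x) = (J1 + J2) / 2 := by
    rw [hJ1, hJ2, ← integral_add i1 i2, ← integral_mul_const, ← integral_div]
    refine setIntegral_congr_fun measurableSet_Ioo fun v hv => ?_
    rw [Real.cosh_eq]
    have a1 : Real.exp (-(2 * x * v)) = Real.exp (x * (1 - 2 * v)) * Real.exp (-x) := by
      rw [← Real.exp_add]; congr 1; ring
    have a2 : Real.exp (-(2 * x * (1 - v))) = Real.exp (-(x * (1 - 2 * v))) * Real.exp (-x) := by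
      rw [← Real.exp_add]; congr 1; ring
    rw [a1, a2]; ring
  have hJ2n : 0 ≤ J2 := setIntegral_nonneg measurableSet_Ioo fun v hv => mul_nonneg (hwnn v hv) (Real.exp_pos _).le
  have hJ2le : J2 ≤ c0 * Real.exp (-x) := by
    rw [hc0, hJ2, ← integral_mul_const]
    refine setIntegral_mono_on i2 (hc0i.mul_const _) measurableSet_Ioo fun v hv => ?_
    exact mul_le_mul_of_nonneg_left (hle2 v hv) (hwnn v hv)
  have hJ1b := J1_bound μ M x hμ1 hx hM hM2
  rw [← hJ1] at hJ1b
  have hR : (x/2)^ν / (Real.sqrt π * Real.Gamma (μ + 1)) * (4:ℝ) ^ (μ + 1) * Real.sqrt (2 * π * x) / 2 = (2 * x) ^ (μ + 1) / Real.Gamma (μ + 1) := by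
    have b1 : Real.sqrt (2 * π * x) = Real.sqrt π * (2 ^ (1/2:ℝ) * x ^ (1/2:ℝ)) := by
      rw [show 2 * π * x = π * (2 * x) by ring, Real.sqrt_mul Real.pi_pos.le, Real.sqrt_eq_rpow (2 * x), Real.mul_rpow (by norm_num) hx.le]
    have b2 : (4:ℝ) ^ (μ + 1) = 2 ^ (μ + 1) * 2 ^ (μ + 1) := by
      rw [← Real.mul_rpow (by norm_num) (by norm_num)]; norm_num
    have b3 : (x/2)^ν = x ^ ν / 2 ^ ν := Real.div_rpow hx.le (by norm_num) ν
    have b4 : x ^ (μ + 1) = x ^ ν * x ^ (1/2:ℝ) := by rw [← Real.rpow_add hx]; congr 1; rw [hμ]; ring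
    have b5 : (2:ℝ) ^ (μ + 1) = 2 ^ ν * 2 ^ (1/2:ℝ) := by rw [← Real.rpow_add two_pos]; congr 1; rw [hμ]; ring
    have b6 : (2:ℝ) ^ (1/2:ℝ) * 2 ^ (1/2:ℝ) = 2 := by rw [← Real.rpow_add two_pos]; norm_num
    rw [Real.mul_rpow (by norm_num) hx.le, b1, b2, b3, b4, b5]
    have g6 : 0 < Real.sqrt π := Real.sqrt_pos.2 Real.pi_pos
    have : (0:ℝ) < 2 ^ ν := by positivity
    field_simp
    rw [show ((2:ℝ)^(1/2:ℝ))^2 = 2 by rw [sq, b6]]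
  have hmain : besselI ν x * Real.sqrt (2 * π * x) * Real.exp (-x) = (2 * x) ^ (μ + 1) / Real.Gamma (μ + 1) * (J1 + J2) := by
    rw [hB, ← hR]
    calc _ = (x/2)^ν / (Real.sqrt π * Real.Gamma (μ + 1)) * (4:ℝ) ^ (μ + 1) * Real.sqrt (2 * π * x) * ((∫ v in Ioo (0:ℝ) (1/2), (v * (1 - v)) ^ μ * Real.cosh (x * (1 - 2 * v))) * Real.exp (-x)) := by ring
      _ = _ := by rw [hI]; ring
  rw [hmain]
  have hx2 : 0 < 2 * x := by linarith
  have hinv : (1 / (2 * x)) ^ (μ + 1) = ((2 * x) ^ (μ + 1))⁻¹ := by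
    rw [one_div, Real.inv_rpow hx2.le]
  have hinv2 : (1 / (2 * x)) ^ (μ + 2) = ((2 * x) ^ (μ + 1))⁻¹ * (1 / (2 * x)) := by
    rw [← hinv, ← Real.rpow_add_one (by positivity)]; congr 1; ring
  have hG2 : Real.Gamma (μ + 2) = (μ + 1) * Real.Gamma (μ + 1) := by
    rw [← Real.Gamma_add_one (by linarith)]; congr 1; ring
  rw [hinv, hinv2, hG2] at hJ1b
  set X := (2 * x) ^ (μ + 1) with hX
  have hXp : 0 < X := by positivity
  have hsplit : X / Real.Gamma (μ + 1) * (J1 + J2) - 1 = X / Real.Gamma (μ + 1) * (J1 - X⁻¹ * Real.Gamma (μ + 1)) + X / Real.Gamma (μ + 1) * J2 := by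
    field_simp; ring
  rw [hsplit]
  have t1 : |X / Real.Gamma (μ + 1) * (J1 - X⁻¹ * Real.Gamma (μ + 1))| ≤ (M * (μ + 1) / 2) / x := by
    rw [abs_mul, abs_of_pos (by positivity)]
    calc _ ≤ X / Real.Gamma (μ + 1) * (M * (X⁻¹ * (1 / (2 * x)) * ((μ + 1) * Real.Gamma (μ + 1)))) :=
          mul_le_mul_of_nonneg_left hJ1b (by positivity)
      _ = _ := by field_simp
  have t2 : |X / Real.Gamma (μ + 1) * J2| ≤ (c0 / Real.Gamma (μ + 1) * 2 ^ (μ + 1) * (μ + 2) ^ (μ + 2)) / x := by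
    rw [abs_of_nonneg (by positivity)]
    have h1 := rpow_le_exp (μ + 2) x hμ2 hx
    have h2 : x ^ (μ + 2) = x ^ (μ + 1) * x := by rw [← Real.rpow_add_one hx.ne']; congr 1; ring
    have h3 : X = 2 ^ (μ + 1) * x ^ (μ + 1) := Real.mul_rpow (by norm_num) hx.le
    rw [h2] at h1
    have h4 : x ^ (μ + 1) * Real.exp (-x) ≤ (μ + 2) ^ (μ + 2) / x := by
      rw [le_div_iff₀ hx, Real.exp_neg]
      rw [mul_right_comm, mul_inv_le_iff₀ (Real.exp_pos _)]; exact h1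
    calc X / Real.Gamma (μ + 1) * J2 ≤ X / Real.Gamma (μ + 1) * (c0 * Real.exp (-x)) :=
          mul_le_mul_of_nonneg_left hJ2le (by positivity)
      _ = c0 / Real.Gamma (μ + 1) * 2 ^ (μ + 1) * (x ^ (μ + 1) * Real.exp (-x)) := by rw [h3]; ring
      _ ≤ c0 / Real.Gamma (μ + 1) * 2 ^ (μ + 1) * ((μ + 2) ^ (μ + 2) / x) :=
          mul_le_mul_of_nonneg_left h4 (by positivity)
      _ = _ := by ring
  calc _ ≤ _ := abs_add_le _ _
    _ ≤ _ := add_le_add t1 t2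
    _ = _ := by ring

lemma besselI_measurable_comp (ν : ℝ) (hν : 0 < ν) (g : ℝ → ℝ) (hg : Measurable g) (hpos : ∀ v, 0 < g v) :
    Measurable (fun v => besselI ν (g v)) := by
  refine measurable_of_tendsto_metrizable
    (f := fun n v => ∑ m ∈ Finset.range n, (g v / 2) ^ (2 * (m : ℝ) + ν) / ((m.factorial : ℝ) * Real.Gamma ((m : ℝ) + ν + 1))) ?_ ?_
  · intro n; fun_prop
  · rw [tendsto_pi_nhds]
    intro v
    exact (bessel_hasSum ν (g v) hν (hpos v)).summable.hasSum.tendsto_sum_nat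

noncomputable def lapE (A B q c δ v : ℝ) : ℝ :=
  c * δ * v - A * (Real.exp (-(δ * v)) + Real.exp (2 * q * (δ * v)) / (2 * q) - 1 - 1 / (2 * q)) / δ^2
    + B * (Real.exp (q * (δ * v)) - 1) / δ

noncomputable def lapE0 (A B q v : ℝ) : ℝ := -(A * (1 + 2 * q)) / 2 * v^2 + B * q * v

lemma psi_bound (q w : ℝ) (hq : 0 < q) :
    min 1 q / 2 * w^2 ≤ Real.exp (-w) - 1 + w + (Real.exp (q * w) - 1 - q * w) / q := by
  have h1 : 0 ≤ Real.exp (-w) - 1 + w := by have := Real.add_one_le_exp (-w); linarith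
  have h2 : 0 ≤ (Real.exp (q * w) - 1 - q * w) / q := by
    have := Real.add_one_le_exp (q * w)
    exact div_nonneg (by linarith) hq.le
  rcases le_total 0 w with h | h
  · have h3 := Real.quadratic_le_exp_of_nonneg (x := q * w) (by positivity)
    have h4 : q / 2 * w^2 ≤ (Real.exp (q * w) - 1 - q * w) / q := by
      rw [le_div_iff₀ hq]; nlinarith
    have : min 1 q / 2 * w^2 ≤ q / 2 * w^2 := by gcongr; exact min_le_right _ _
    linarith
  · have h3 := Real.quadratic_le_exp_of_nonneg (x := -w) (by linarith)
    have h4 : 1 / 2 * w^2 ≤ Real.exp (-w) - 1 + w := by nlinarith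
    have : min 1 q / 2 * w^2 ≤ 1 / 2 * w^2 := by gcongr; exact min_le_left _ _
    linarith

lemma lapE_le (A B q c δ v : ℝ) (hA : 0 < A) (hq : 0 < q) (hδ : 0 < δ) (hδ1 : δ ≤ 1) :
    lapE A B q c δ v ≤ B^2 * q / A - A * (min 1 q / 2) * v^2 + |c| * |v| := by
  have hpsi := psi_bound q (δ * v) hq
  set w := δ * v with hw
  set X := Real.exp (q * w) - 1 with hX
  have e1 : Real.exp (2 * q * w) = (X + 1)^2 := by
    rw [hX, sub_add_cancel, sq, ← Real.exp_add]; congr 1; ring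
  have hc : c * δ * v ≤ |c| * |v| := by
    calc c * δ * v ≤ |c * δ * v| := le_abs_self _
      _ = |c| * δ * |v| := by rw [abs_mul, abs_mul, abs_of_pos hδ]
      _ ≤ |c| * 1 * |v| := by gcongr
      _ = _ := by ring
  have hsq : 0 ≤ A / (4 * q) * (X - 2 * q * B * δ / A)^2 := by positivity
  have e2 : A / (4 * q) * (X - 2 * q * B * δ / A)^2 = A / (4 * q) * X^2 - B * δ * X + B^2 * q / A * δ^2 := by
    field_simp; ring
  have e4 : A * (Real.exp (-w) + (X+1)^2 / (2 * q) - 1 - 1 / (2 * q)) = A * (Real.exp (-w) - 1 + w + (X - q * w) / q) + A / (4 * q) * X^2 + A / (4 * q) * X^2 := by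
    field_simp; ring
  have hX2 : 0 ≤ A / (4 * q) * X^2 := by positivity
  have key : - (A * (Real.exp (-w) + (X+1)^2 / (2 * q) - 1 - 1 / (2 * q))) + B * X * δ ≤ (B^2 * q / A - A * (min 1 q / 2) * v^2) * δ^2 := by
    rw [e4]
    have h5 := mul_le_mul_of_nonneg_left hpsi hA.le
    have e5 : (B^2 * q / A - A * (min 1 q / 2) * v^2) * δ^2 = B^2 * q / A * δ^2 - A * (min 1 q / 2 * w^2) := by
      rw [hw]; ring
    rw [e5]; linarith
  unfold lapE
  rw [← hw, e1, ← hX]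
  have e6 : - (A * (Real.exp (-w) + (X+1)^2 / (2 * q) - 1 - 1 / (2 * q))) / δ^2 + B * X / δ ≤ B^2 * q / A - A * (min 1 q / 2) * v^2 := by
    have : - (A * (Real.exp (-w) + (X+1)^2 / (2 * q) - 1 - 1 / (2 * q))) / δ^2 + B * X / δ = (- (A * (Real.exp (-w) + (X+1)^2 / (2 * q) - 1 - 1 / (2 * q))) + B * X * δ) / δ^2 := by
      field_simp
    rw [this, div_le_iff₀ (by positivity)]; exact key
  rw [neg_div] at e6
  linarith

lemma lapE0_le (A B q c v : ℝ) (hA : 0 < A) (hq : 0 < q) :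
    lapE0 A B q v ≤ B^2 * q / A - A * (min 1 q / 2) * v^2 + |c| * |v| := by
  unfold lapE0
  have hsq : 0 ≤ A * q / 4 * (v - 2 * B / A)^2 := by positivity
  have e2 : A * q / 4 * (v - 2 * B / A)^2 = A * q / 4 * v^2 - B * q * v + B^2 * q / A := by
    field_simp; ring
  have h1 : A * (min 1 q / 2) * v^2 ≤ A * (1/2) * v^2 := by gcongr; exact min_le_left _ _
  have h2 : 0 ≤ |c| * |v| := by positivity
  have h3 : 0 ≤ A * q * v^2 := by positivity
  nlinarith

lemma lapE_diff (A B q c δ v : ℝ) (hA : 0 < A) (hB : 0 < B) (hq : 0 < q) (hδ : 0 < δ)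
    (hw1 : |δ * v| ≤ 1) (hw2 : 2 * q * |δ * v| ≤ 1) :
    |lapE A B q c δ v - lapE0 A B q v| ≤ δ * (|c| * |v| + A * (1 + 4 * q^2) * |v|^3 + B * q^2 * |v|^2) := by
  set w := δ * v with hw
  have b1 := Real.exp_bound (x := -w) (by rwa [abs_neg]) (n := 3) (by norm_num)
  have b2 := Real.exp_bound (x := 2 * q * w) (by rw [abs_mul, abs_of_pos (by positivity : 0 < 2 * q)]; exact hw2) (n := 3) (by norm_num)
  have b3 := Real.abs_exp_sub_one_sub_id_le (x := q * w) (by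
    rw [abs_mul, abs_of_pos hq]; have : 0 ≤ q * |w| := by positivity
    linarith)
  simp only [Finset.sum_range_succ, Finset.sum_range_zero, Nat.factorial] at b1 b2
  norm_num at b1 b2
  set R1 := Real.exp (-w) - (1 + -w + w^2/2) with hR1
  set R2 := Real.exp (2 * q * w) - (1 + 2 * q * w + (2 * q * w)^2/2) with hR2
  set R3 := Real.exp (q * w) - 1 - q * w with hR3
  have c1 : |R1| ≤ |w|^3 := by
    refine b1.trans ?_
    have : 0 ≤ |w|^3 := by positivity
    linarith
  have c2 : |R2| ≤ (2 * q)^3 * |w|^3 := by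
    refine b2.trans ?_
    rw [abs_of_pos hq, mul_pow]
    have : 0 ≤ (2*q)^3 * |w|^3 := by positivity
    linarith
  have c3 : |R3| ≤ q^2 * |w|^2 := by rw [sq_abs]; rw [mul_pow] at b3; exact b3
  have hid : lapE A B q c δ v - lapE0 A B q v = c * δ * v - A * R1 / δ^2 - A * R2 / (2 * q) / δ^2 + B * R3 / δ := by
    unfold lapE lapE0
    rw [← hw, hR1, hR2, hR3]
    have hv : v = w / δ := by rw [hw]; field_simp
    rw [hv]; field_simp; ring
  have hwa : |w| = δ * |v| := by rw [hw, abs_mul, abs_of_pos hδ]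
  rw [hid]
  have d0 : |c * δ * v| = δ * (|c| * |v|) := by rw [abs_mul, abs_mul, abs_of_pos hδ]; ring
  have d1 : |A * R1 / δ^2| ≤ δ * (A * |v|^3) := by
    rw [abs_div, abs_mul, abs_of_pos hA, abs_of_pos (by positivity : 0 < δ^2), div_le_iff₀ (by positivity)]
    calc A * |R1| ≤ A * |w|^3 := by gcongr
      _ = _ := by rw [hwa]; ring
  have d2 : |A * R2 / (2 * q) / δ^2| ≤ δ * (A * (4 * q^2) * |v|^3) := by
    rw [abs_div, abs_div, abs_mul, abs_of_pos hA, abs_of_pos (by positivity : 0 < δ^2), abs_of_pos (by positivity : 0 < 2 * q),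
      div_le_iff₀ (by positivity), div_le_iff₀ (by positivity)]
    calc A * |R2| ≤ A * ((2 * q)^3 * |w|^3) := by gcongr
      _ = _ := by rw [hwa]; ring
  have d3 : |B * R3 / δ| ≤ δ * (B * q^2 * |v|^2) := by
    rw [abs_div, abs_mul, abs_of_pos hB, abs_of_pos hδ, div_le_iff₀ hδ]
    calc B * |R3| ≤ B * (q^2 * |w|^2) := by gcongr
      _ = _ := by rw [hwa]; ring
  calc _ ≤ |c * δ * v| + |A * R1 / δ^2| + |A * R2 / (2 * q) / δ^2| + |B * R3 / δ| := by
        refine (abs_add_le _ _).trans (add_le_add_left ((abs_sub _ _).trans (add_le_add_left (abs_sub _ _) _)) _)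
    _ ≤ δ * (|c| * |v|) + δ * (A * |v|^3) + δ * (A * (4 * q^2) * |v|^3) + δ * (B * q^2 * |v|^2) := by
        rw [d0]; gcongr
    _ = _ := by ring

lemma exp_sub_exp_le (a b m : ℝ) (ha : a ≤ m) (hb : b ≤ m) : |Real.exp a - Real.exp b| ≤ |a - b| * Real.exp m := by
  wlog h : b ≤ a generalizing a b
  · rw [abs_sub_comm, abs_sub_comm a b]; exact this b a hb ha (le_of_not_ge h)
  rw [abs_of_nonneg (by rw [sub_nonneg]; exact Real.exp_le_exp.2 h), abs_of_nonneg (by linarith)]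
  have h1 := Real.add_one_le_exp (b - a)
  have h2 : Real.exp b = Real.exp a * Real.exp (b - a) := by rw [← Real.exp_add]; congr 1; ring
  have h3 := Real.exp_pos a
  have h4 : Real.exp a - Real.exp b ≤ (a - b) * Real.exp a := by rw [h2]; nlinarith
  exact h4.trans (mul_le_mul_of_nonneg_left (Real.exp_le_exp.2 ha) (by linarith))

lemma lap_main (A B q c : ℝ) (hA : 0 < A) (hB : 0 < B) (hq : 0 < q) :
    ∃ K > 0, ∀ δ > 0, δ ≤ 1 → Integrable (fun v => Real.exp (lapE A B q c δ v)) ∧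
      |(∫ v, Real.exp (lapE A B q c δ v)) - ∫ v, Real.exp (lapE0 A B q v)| ≤ K * δ := by
  set κ := A * (min 1 q / 2) with hκ
  have hκp : 0 < κ := by have : 0 < min 1 q := lt_min one_pos hq
                         positivity
  set K0 := B^2 * q / A with hK0
  set K1 := K0 + (|c| + 1)^2 / (2 * κ) with hK1
  set r := 1 + 2 * q with hr
  set Kp := |c| + A * (1 + 4 * q^2) * 6 + B * q^2 * 2 + 2 * r with hKp
  have hKpp : 0 < Kp := by positivity
  -- bounds by the gaussian
  have gb : ∀ v : ℝ, Real.exp (K0 - κ * v^2 + |c| * |v|) * Real.exp |v| ≤ Real.exp K1 * Real.exp (-(κ/2) * v^2) := by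
    intro v
    rw [← Real.exp_add, ← Real.exp_add, Real.exp_le_exp]
    have h1 : 0 ≤ κ / 2 * (|v| - (|c| + 1) / κ)^2 := by positivity
    have h2 : κ / 2 * (|v| - (|c| + 1) / κ)^2 = κ / 2 * |v|^2 - (|c| + 1) * |v| + (|c|+1)^2 / (2 * κ) := by
      field_simp; ring
    rw [sq_abs] at h2
    rw [hK1]; linarith
  have gb' : ∀ v : ℝ, Real.exp (K0 - κ * v^2 + |c| * |v|) ≤ Real.exp K1 * Real.exp (-(κ/2) * v^2) := by
    intro v
    refine le_trans ?_ (gb v)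
    have := Real.one_le_exp (abs_nonneg v)
    exact le_mul_of_one_le_right (Real.exp_pos _).le this
  have gi : Integrable (fun v : ℝ => Real.exp K1 * Real.exp (-(κ/2) * v^2)) :=
    (integrable_exp_neg_mul_sq (by positivity)).const_mul _
  have hi0 : Integrable (fun v => Real.exp (lapE0 A B q v)) := by
    refine Integrable.mono' gi ?_ (ae_of_all _ fun v => ?_)
    · unfold lapE0; exact (by fun_prop : Continuous _).aestronglyMeasurable
    · rw [Real.norm_of_nonneg (Real.exp_pos _).le]
      exact (Real.exp_le_exp.2 (lapE0_le A B q c v hA hq)).trans (gb' v)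
  refine ⟨(∫ v, Kp * (Real.exp K1 * Real.exp (-(κ/2) * v^2))) + 1, ?_, ?_⟩
  · have : 0 ≤ ∫ v, Kp * (Real.exp K1 * Real.exp (-(κ/2) * v^2)) := integral_nonneg fun v => by
      show (0:ℝ) ≤ _
      positivity
    linarith
  intro δ hδ hδ1
  have hi : Integrable (fun v => Real.exp (lapE A B q c δ v)) := by
    refine Integrable.mono' gi ?_ (ae_of_all _ fun v => ?_)
    · unfold lapE; exact (by fun_prop : Continuous _).aestronglyMeasurable
    · rw [Real.norm_of_nonneg (Real.exp_pos _).le]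
      exact (Real.exp_le_exp.2 (lapE_le A B q c δ v hA hq hδ hδ1)).trans (gb' v)
  refine ⟨hi, ?_⟩
  rw [← integral_sub hi hi0, ← Real.norm_eq_abs]
  have hfin : ‖∫ v, (Real.exp (lapE A B q c δ v) - Real.exp (lapE0 A B q v))‖ ≤ ∫ v, Kp * (Real.exp K1 * Real.exp (-(κ/2) * v^2)) * δ := by
    refine norm_integral_le_of_norm_le ((gi.const_mul Kp).mul_const δ) (ae_of_all _ fun v => ?_)
    rw [Real.norm_eq_abs]
    have u1 := lapE_le A B q c δ v hA hq hδ hδ1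
    have u0 := lapE0_le A B q c v hA hq
    rw [← hK0, ← hκ] at u1 u0
    set m := K0 - κ * v^2 + |c| * |v| with hm
    have p1 : |v| ≤ Real.exp |v| := by have := Real.add_one_le_exp |v|; linarith
    have p2 : |v|^2 ≤ 2 * Real.exp |v| := by
      have := Real.pow_div_factorial_le_exp |v| (abs_nonneg v) 2
      norm_num [Nat.factorial] at this ⊢; linarith
    have p3 : |v|^3 ≤ 6 * Real.exp |v| := by
      have := Real.pow_div_factorial_le_exp |v| (abs_nonneg v) 3
      norm_num [Nat.factorial] at this ⊢; linarith
    have hpoly : |Real.exp (lapE A B q c δ v) - Real.exp (lapE0 A B q v)| ≤ δ * (|c| * |v| + A * (1 + 4 * q^2) * |v|^3 + B * q^2 * |v|^2 + 2 * r * |v|) * Real.exp m := by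
      have hnn : 0 ≤ δ * (|c| * |v| + A * (1 + 4 * q^2) * |v|^3 + B * q^2 * |v|^2) := by positivity
      by_cases hw : r * |δ * v| ≤ 1
      · have h0 := abs_nonneg (δ * v)
        have hw1 : |δ * v| ≤ 1 := by rw [hr] at hw; nlinarith
        have hw2 : 2 * q * |δ * v| ≤ 1 := by rw [hr] at hw; nlinarith
        refine (exp_sub_exp_le _ _ m u1 u0).trans ?_
        refine mul_le_mul_of_nonneg_right ?_ (Real.exp_pos _).le
        refine (lapE_diff A B q c δ v hA hB hq hδ hw1 hw2).trans ?_
        refine mul_le_mul_of_nonneg_left ?_ hδ.le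
        have : 0 ≤ 2 * r * |v| := by positivity
        linarith
      · have hw : 1 ≤ r * |δ * v| := le_of_not_ge hw
        rw [abs_mul, abs_of_pos hδ] at hw
        have h1 : |Real.exp (lapE A B q c δ v) - Real.exp (lapE0 A B q v)| ≤ 2 * Real.exp m := by
          refine (abs_sub _ _).trans ?_
          rw [abs_of_pos (Real.exp_pos _), abs_of_pos (Real.exp_pos _)]
          have := Real.exp_le_exp.2 u1
          have := Real.exp_le_exp.2 u0
          linarith
        refine h1.trans (mul_le_mul_of_nonneg_right ?_ (Real.exp_pos _).le)
        nlinarith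
    refine hpoly.trans ?_
    have hpp : |c| * |v| + A * (1 + 4 * q^2) * |v|^3 + B * q^2 * |v|^2 + 2 * r * |v| ≤ Kp * Real.exp |v| := by
      calc _ ≤ |c| * Real.exp |v| + A * (1 + 4 * q^2) * (6 * Real.exp |v|) + B * q^2 * (2 * Real.exp |v|) + 2 * r * Real.exp |v| := by
            gcongr
        _ = _ := by rw [hKp]; ring
    calc _ ≤ δ * (Kp * Real.exp |v|) * Real.exp m := by gcongr
      _ = Kp * δ * (Real.exp m * Real.exp |v|) := by ring
      _ ≤ Kp * δ * (Real.exp K1 * Real.exp (-(κ/2) * v^2)) := mul_le_mul_of_nonneg_left (gb v) (by positivity)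
      _ = _ := by ring
  rw [integral_mul_const] at hfin
  refine hfin.trans ?_
  gcongr
  linarith

lemma lap0_int (A B q : ℝ) (hA : 0 < A) (hq : 0 < q) :
    ∫ v, Real.exp (lapE0 A B q v) = Real.sqrt (2 * π / (A * (1 + 2 * q))) * Real.exp ((B * q)^2 / (2 * (A * (1 + 2 * q)))) := by
  set H := A * (1 + 2 * q) with hH
  have hHp : 0 < H := by positivity
  have e : ∀ v, Real.exp (lapE0 A B q v) = Real.exp (-(H/2) * (v - B * q / H)^2) * Real.exp ((B * q)^2 / (2 * H)) := by
    intro v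
    unfold lapE0
    rw [← Real.exp_add]; congr 1; rw [← hH]; field_simp; ring
  simp_rw [e]
  rw [integral_mul_const, integral_sub_right_eq_self (fun v => Real.exp (-(H/2) * v^2)), integral_gaussian]
  congr 2; field_simp

lemma cov (Y δ : ℝ) (hY : 0 < Y) (hδ : 0 < δ) (φ : ℝ → ℝ) :
    ∫ y in Ioi (0:ℝ), φ y = ∫ v, Y * δ * Real.exp (δ * v) * φ (Y * Real.exp (δ * v)) := by
  have himg : (fun v : ℝ => Y * Real.exp (δ * v)) '' univ = Ioi 0 := by
    ext y; constructor
    · rintro ⟨v, -, rfl⟩; show (0:ℝ) < _; positivity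
    · intro hy
      have hy : 0 < y := hy
      refine ⟨Real.log (y / Y) / δ, mem_univ _, ?_⟩
      have : δ * (Real.log (y / Y) / δ) = Real.log (y / Y) := by field_simp
      simp only [this]
      rw [Real.exp_log (by positivity)]; field_simp
  have h := integral_image_eq_integral_abs_deriv_smul (s := univ) (f := fun v : ℝ => Y * Real.exp (δ * v))
    (f' := fun v => Y * δ * Real.exp (δ * v)) MeasurableSet.univ ?_ ?_ φ
  · rw [himg] at h
    rw [h, Measure.restrict_univ]
    refine integral_congr_ae (ae_of_all _ fun v => ?_)
    simp only [smul_eq_mul]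
    rw [abs_of_pos (by positivity)]
  · intro v _
    have := (((hasDerivAt_id v).const_mul δ).exp).const_mul Y
    refine (this.congr_deriv ?_).hasDerivWithinAt
    simp; ring
  · intro a _ b _ hab
    simp only at hab
    have h1 := mul_left_cancel₀ hY.ne' hab
    have h2 := Real.exp_injective h1
    exact mul_left_cancel₀ hδ.ne' h2

lemma lapE_shift (A B q c d δ v : ℝ) : Real.exp (lapE A B q (c + d) δ v) = Real.exp (lapE A B q c δ v) * Real.exp (d * (δ * v)) := by
  rw [← Real.exp_add]; congr 1; unfold lapE; ring

lemma abstract_main (A B q c K1 K2 : ℝ) (hA : 0 < A) (hB : 0 < B) (hq : 0 < q) (hK1 : 0 ≤ K1) (hK2 : 0 ≤ K2) :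
    ∃ K > 0, ∀ δ > 0, δ ≤ 1 → ∀ N > 0, ∀ φ : ℝ → ℝ, Measurable φ →
      (∀ v, |φ v - N * Real.exp (lapE A B q c δ v)| ≤ N * Real.exp (lapE A B q c δ v) * (δ * (K1 * Real.exp (-q * (δ * v)) + K2 * Real.exp (1 * (δ * v))))) →
      |(∫ v, φ v) / (N * ∫ v, Real.exp (lapE0 A B q v)) - 1| ≤ K * δ := by
  obtain ⟨C0, hC0, h0⟩ := lap_main A B q c hA hB hq
  obtain ⟨C1, hC1, h1⟩ := lap_main A B q (c + -q) hA hB hq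
  obtain ⟨C2, hC2, h2⟩ := lap_main A B q (c + 1) hA hB hq
  have hZ : 0 < ∫ v, Real.exp (lapE0 A B q v) := by
    rw [lap0_int A B q hA hq]; positivity
  set Z := ∫ v, Real.exp (lapE0 A B q v)
  refine ⟨(K1 * (Z + C1) + K2 * (Z + C2) + C0) / Z, by positivity, ?_⟩
  intro δ hδ hδ1 N hN φ hφ hb
  obtain ⟨i0, b0⟩ := h0 δ hδ hδ1
  obtain ⟨i1, b1⟩ := h1 δ hδ hδ1
  obtain ⟨i2, b2⟩ := h2 δ hδ hδ1
  set F0 := fun v => Real.exp (lapE A B q c δ v)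
  set F1 := fun v => Real.exp (lapE A B q (c + -q) δ v) with hF1
  set F2 := fun v => Real.exp (lapE A B q (c + 1) δ v) with hF2
  have hb' : ∀ v, ‖φ v - N * F0 v‖ ≤ (N * δ) * (K1 * F1 v + K2 * F2 v) := by
    intro v
    refine (hb v).trans (le_of_eq ?_)
    simp only [hF1, hF2, lapE_shift]; ring
  have ib : Integrable (fun v => (N * δ) * (K1 * F1 v + K2 * F2 v)) :=
    ((i1.const_mul K1).add (i2.const_mul K2)).const_mul _
  have i0N : Integrable (fun v => N * F0 v) := i0.const_mul N
  have idf : Integrable (fun v => φ v - N * F0 v) :=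
    Integrable.mono' ib (hφ.aestronglyMeasurable.sub i0N.1) (ae_of_all _ hb')
  have iφ : Integrable φ := by
    refine (idf.add i0N).congr (ae_of_all _ fun v => ?_)
    simp
  have hm := norm_integral_le_of_norm_le ib (ae_of_all _ hb')
  rw [integral_sub iφ i0N, integral_const_mul, integral_const_mul, integral_add (i1.const_mul K1) (i2.const_mul K2),
    integral_const_mul, integral_const_mul, Real.norm_eq_abs] at hm
  have l1 : ∫ v, F1 v ≤ Z + C1 := by
    have := (abs_le.1 b1).2; nlinarith
  have l2 : ∫ v, F2 v ≤ Z + C2 := by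
    have := (abs_le.1 b2).2; nlinarith
  have hm2 : |(∫ v, φ v) - N * ∫ v, F0 v| ≤ N * δ * (K1 * (Z + C1) + K2 * (Z + C2)) := by
    refine hm.trans ?_
    gcongr
  have e : (∫ v, φ v) / (N * Z) - 1 = (((∫ v, φ v) - N * ∫ v, F0 v) + N * ((∫ v, F0 v) - Z)) / (N * Z) := by
    field_simp; ring
  rw [e, abs_div, abs_of_pos (by positivity : 0 < N * Z), div_le_iff₀ (by positivity)]
  calc _ ≤ |(∫ v, φ v) - N * ∫ v, F0 v| + |N * ((∫ v, F0 v) - Z)| := abs_add_le _ _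
    _ ≤ N * δ * (K1 * (Z + C1) + K2 * (Z + C2)) + N * (C0 * δ) := by
      rw [abs_mul, abs_of_pos hN]; gcongr
    _ = _ := by field_simp

lemma f1_deriv (y0 M e Y : ℝ) (hy0 : 0 < y0) (hY : 0 < Y) :
    deriv (fun y : ℝ => (y * y0) ^ e / M) Y = e * ((Y * y0) ^ e / M) / Y := by
  have h := (((hasDerivAt_id Y).mul_const y0).rpow_const (p := e) (Or.inl (by simp; exact ⟨hY.ne', hy0.ne'⟩))).div_const M
  have h2 := h.deriv
  simp only [id] at h2
  rw [h2, Real.rpow_sub_one (by positivity)]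
  field_simp

lemma f0_deriv2 (k M e Y : ℝ) (hY : 0 < Y) :
    deriv (deriv (fun y : ℝ => k ^ 2 / (2 * y) + y ^ e / M)) Y = k^2 / Y^3 + e * (e - 1) * Y ^ (e - 2) / M := by
  have h1 : ∀ y : ℝ, 0 < y → HasDerivAt (fun y : ℝ => k ^ 2 / (2 * y) + y ^ e / M) (-(k^2 / 2) * y ^ (-2:ℝ) + e * y ^ (e - 1) / M) y := by
    intro y hy
    have a1 := ((hasDerivAt_const y (k^2)).div ((hasDerivAt_id y).const_mul 2) (by simpa using hy.ne'))
    have a2 := ((hasDerivAt_id y).rpow_const (p := e) (Or.inl hy.ne')).div_const M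
    refine (a1.add a2).congr_deriv ?_
    have : y ^ (-2:ℝ) = (y^2)⁻¹ := by rw [Real.rpow_neg hy.le]; norm_cast
    rw [this]
    simp only [id]
    field_simp; ring
  have h2 : deriv (fun y : ℝ => k ^ 2 / (2 * y) + y ^ e / M) =ᶠ[𝓝 Y] fun y => -(k^2 / 2) * y ^ (-2:ℝ) + e * y ^ (e - 1) / M := by
    filter_upwards [Ioi_mem_nhds hY] with y hy using (h1 y hy).deriv
  rw [h2.deriv_eq]
  have b1 := ((hasDerivAt_id Y).rpow_const (p := -2) (Or.inl hY.ne')).const_mul (-(k^2/2))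
  have b2 := (((hasDerivAt_id Y).rpow_const (p := e - 1) (Or.inl hY.ne')).const_mul e).div_const M
  have := (b1.add b2).deriv
  refine Eq.trans ?_ (this.trans ?_)
  · rfl
  · simp only [id]
    have c1 : Y ^ (-2 - 1 : ℝ) = (Y^3)⁻¹ := by
      rw [show (-2 - 1 : ℝ) = -3 by norm_num, Real.rpow_neg hY.le]; norm_cast
    rw [c1, show e - 1 - 1 = e - 2 by ring]; field_simp

lemma prod_bound (b b0 U Bm K C s x : ℝ) (hb : 0 ≤ b) (hbU : b ≤ U) (hUb : U * (1 - C * s) ≤ b)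
    (hBm : 0 < Bm) (h2 : |b0 - Bm| ≤ Bm * (K / x)) :
    |b * b0 - U * Bm| ≤ U * Bm * (K / x + C * s) := by
  have e : b * b0 - U * Bm = b * (b0 - Bm) + (b - U) * Bm := by ring
  rw [e]
  refine (abs_add_le _ _).trans ?_
  rw [abs_mul, abs_mul, abs_of_nonneg hb, abs_of_pos hBm]
  have h3 : |b - U| ≤ U * (C * s) := by
    rw [abs_le]; constructor <;> nlinarith
  have h4 : b * |b0 - Bm| ≤ U * (Bm * (K / x)) := by
    apply mul_le_mul hbU h2 (abs_nonneg _) (hb.trans hbU)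
  have h5 := mul_le_mul_of_nonneg_right h3 hBm.le
  nlinarith

lemma model_bound (k ν : ℝ) (hk : 0 < k) (hν : 0 < ν) : ∃ K > 0, ∀ s > 0, ∀ x > 0,
    |bsd k s * besselI ν x - Real.exp (k/2) / √(2*π) / k^2 * (s * √s * Real.exp (-k^2/(2*s))) * (Real.exp x / √(2*π*x))|
     ≤ Real.exp (k/2) / √(2*π) / k^2 * (s * √s * Real.exp (-k^2/(2*s))) * (Real.exp x / √(2*π*x)) * (K / x + (3/k^2+1/8) * s) := by
  obtain ⟨K, hK, h⟩ := bessel_asymp ν hν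
  refine ⟨K, hK, fun s hs x hx => ?_⟩
  obtain ⟨b1, b2, b3⟩ := bs_bounds k hk s hs
  refine prod_bound _ _ _ _ _ _ _ _ b1 b2 b3 (by positivity) ?_
  have hx0 : 0 < √(2*π*x) := by positivity
  have e : besselI ν x - Real.exp x / √(2*π*x) = (Real.exp x / √(2*π*x)) * (besselI ν x * √(2*π*x) * Real.exp (-x) - 1) := by
    rw [Real.exp_neg]; field_simp
  rw [e, abs_mul, abs_of_pos (show 0 < Real.exp x / √(2*π*x) by positivity)]
  exact mul_le_mul_of_nonneg_left (h x hx) (by positivity)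

lemma alg1 (t ξ y0 q y τ : ℝ) (ht : 0 < t) (hξ : 0 < ξ) (hy0 : 0 < y0) (hq : 0 < q) (hy : 0 < y) (hτ : 0 < τ) :
    √y0 * y ^ ((1:ℝ)/2 - 2 * (1 - q)) / (q * ξ^2 * t) * ((y*τ) * √(y*τ)) / √((y0*y)^q / (q^2*ξ^2*t))
     = y0 ^ ((1-q)/2) / (ξ * √t) * τ ^ ((3:ℝ)/2) * y ^ (3*q/2) := by
  have h1 : √((y0*y)^q / (q^2*ξ^2*t)) = (y0^(q/2) * y^(q/2)) / (q*ξ*√t) := by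
    rw [Real.sqrt_eq_iff_mul_self_eq (by positivity) (by positivity), div_mul_div_comm]
    have e1 : y0^(q/2)*y^(q/2)*(y0^(q/2)*y^(q/2)) = (y0*y)^q := by
      rw [← Real.mul_rpow hy0.le hy.le, ← Real.rpow_add (by positivity)]; congr 1; ring
    have e2 : q*ξ*√t*(q*ξ*√t) = q^2*ξ^2*t := by
      have := Real.mul_self_sqrt ht.le
      calc _ = q^2*ξ^2*(√t*√t) := by ring
        _ = _ := by rw [this]
    rw [e1, e2]
  rw [h1]
  have h2 : √(y*τ) = y^((1:ℝ)/2)*τ^((1:ℝ)/2) := by rw [Real.sqrt_eq_rpow, Real.mul_rpow hy.le hτ.le]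
  have h3 : τ ^ ((3:ℝ)/2) = τ * τ^((1:ℝ)/2) := by
    rw [← Real.rpow_one_add' hτ.le (by norm_num)]; norm_num
  have h4 : y ^ (3*q/2) * y^(q/2) = y ^ ((1:ℝ)/2 - 2 * (1 - q)) * (y * y^((1:ℝ)/2)) := by
    rw [← Real.rpow_one_add' hy.le (by norm_num), ← Real.rpow_add hy, ← Real.rpow_add hy]; congr 1; ring
  have h5 : √y0 = y0 ^ ((1-q)/2) * y0^(q/2) := by
    rw [← Real.rpow_add hy0, Real.sqrt_eq_rpow]; congr 1; ring
  have h6 : t = √t * √t := (Real.mul_self_sqrt ht.le).symm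
  rw [h2, h3, h5]
  have hst : 0 < √t := by positivity
  generalize √t = r at *
  subst h6
  have : 0 < y0^(q/2) := by positivity
  have : 0 < y^(q/2) := by positivity
  generalize y ^ (3*q/2) = u1 at *
  generalize y^(q/2) = u2 at *
  generalize y ^ ((1:ℝ)/2 - 2 * (1 - q)) = u3 at *
  generalize y ^ ((1:ℝ)/2) = u4 at *
  field_simp
  linear_combination (-1) * h4
lemma pw_s (Yb τ β q e : ℝ) (hτ : 0 < τ) :
    (Yb * τ ^ (-β) * e) * τ = Yb * (τ ^ ((1-β)/2))^2 * e := by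
  have : τ ^ (-β) * τ = (τ ^ ((1-β)/2))^2 := by
    rw [← Real.rpow_natCast, ← Real.rpow_mul hτ.le]
    nth_rewrite 2 [← Real.rpow_one τ]
    rw [← Real.rpow_add hτ]; congr 1; push_cast; ring
  rw [← this]; ring

lemma pw_pow (Yb τ β q m w : ℝ) (hτ : 0 < τ) (hY : 0 < Yb) :
    (Yb * τ ^ (-β) * Real.exp w) ^ m = Yb ^ m * τ ^ (-(β * m)) * Real.exp (m * w) := by
  rw [Real.mul_rpow (by positivity) (by positivity), Real.mul_rpow (by positivity) (by positivity),
    ← Real.rpow_mul hτ.le, ← Real.exp_mul, mul_comm w m, neg_mul]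

lemma pw_x (t ξ y0 Yb τ β q w : ℝ) (hτ : 0 < τ) (hY : 0 < Yb) (hy0 : 0 < y0) (hβ : β * (1 + 2 * q) = 1) :
    (y0 * (Yb * τ ^ (-β) * Real.exp w)) ^ q / (q^2*ξ^2*t) =
     (Yb * y0)^q / (ξ^2*t*q^2) * Real.exp (q * w) / τ ^ ((1-β)/2) := by
  rw [Real.mul_rpow hy0.le (by positivity), pw_pow Yb τ β q q w hτ hY, Real.mul_rpow hY.le hy0.le,
    Real.rpow_neg hτ.le, show (1-β)/2 = β * q by linarith, show ξ^2*t*q^2 = q^2*ξ^2*t by ring]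
  simp only [div_eq_mul_inv]; ring

lemma pw_x2 (M Yb τ β q w : ℝ) (hτ : 0 < τ) (hY : 0 < Yb) (hβ : β * (1 + 2 * q) = 1) :
    (Yb * τ ^ (-β) * Real.exp w) ^ (2*q) / M =
     Yb^(2*q) / M * Real.exp (2 * q * w) / (τ ^ ((1-β)/2))^2 := by
  rw [pw_pow Yb τ β q (2*q) w hτ hY, Real.rpow_neg hτ.le, ← Real.rpow_natCast (τ ^ ((1-β)/2)), ← Real.rpow_mul hτ.le,
     show (1-β)/2 * ((2:ℕ):ℝ) = β * (2*q) by push_cast; linarith]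
  simp only [div_eq_mul_inv]; ring

noncomputable def bigN (t ξ y0 q k Yb β τ : ℝ) : ℝ :=
  Real.exp (k/2) / (2*π) / k^2 * Real.exp (-(y0^(2*q)) / (2*ξ^2*t*q^2)) * (y0 ^ ((1-q)/2) / (ξ * √t) * τ ^ ((3:ℝ)/2))
   * (τ ^ ((1-β)/2) * (Yb * τ ^ (-β)) ^ (3*q/2+1))
   * Real.exp (-(k^2/(2*Yb) * (1 + 1/(2*q))) / (τ ^ ((1-β)/2))^2 + (Yb * y0)^q / (ξ^2*t*q^2) / τ ^ ((1-β)/2))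

lemma pw_main (t ξ y0 q k Yb β τ v : ℝ) (ht : 0 < t) (hξ : 0 < ξ) (hy0 : 0 < y0) (hq : 0 < q) (hk : 0 < k)
    (hY : 0 < Yb) (hτ : 0 < τ) (hβ : β * (1 + 2 * q) = 1)
    (hYb : Yb ^ (2*q) / (2*ξ^2*t*q^2) = k^2/(2*Yb)/(2*q)) (δ y s x : ℝ) (hδ : δ = τ ^ ((1-β)/2))
    (hy : y = Yb * τ ^ (-β) * Real.exp (δ * v)) (hs : s = y * τ) (hx : x = (y0*y)^q / (q^2*ξ^2*t)) :
    (Yb * τ ^ (-β)) * δ * Real.exp (δ * v) *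
      (√y0 * y ^ ((1:ℝ)/2 - 2 * (1 - q)) / (q * ξ^2 * t) * Real.exp (-(y^(2*q) + y0^(2*q)) / (2*ξ^2*t*q^2))
       * (Real.exp (k/2) / √(2*π) / k^2 * (s * √s * Real.exp (-k^2/(2*s))) * (Real.exp x / √(2*π*x))))
    = bigN t ξ y0 q k Yb β τ * Real.exp (lapE (k^2/(2*Yb)) ((Yb * y0)^q / (ξ^2*t*q^2)) q (3*q/2+1) δ v) := by
  have hδ0 : 0 < δ := by rw [hδ]; positivity
  have hy0' : 0 < y := by rw [hy]; positivity
  have hx0 : 0 < x := by rw [hx]; positivity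
  have a1 := alg1 t ξ y0 q y τ ht hξ hy0 hq hy0' hτ
  rw [← hs, ← hx] at a1
  have hs2 : √(2*π*x) = √(2*π) * √x := Real.sqrt_mul (by positivity) _
  have h2p : √(2*π) * √(2*π) = 2*π := Real.mul_self_sqrt (by positivity)
  have e1 : (Yb * τ ^ (-β)) * δ * Real.exp (δ * v) *
      (√y0 * y ^ ((1:ℝ)/2 - 2 * (1 - q)) / (q * ξ^2 * t) * Real.exp (-(y^(2*q) + y0^(2*q)) / (2*ξ^2*t*q^2))
       * (Real.exp (k/2) / √(2*π) / k^2 * (s * √s * Real.exp (-k^2/(2*s))) * (Real.exp x / √(2*π*x))))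
     = δ * y * (Real.exp (k/2) / (2*π) / k^2) * (√y0 * y ^ ((1:ℝ)/2 - 2 * (1 - q)) / (q * ξ^2 * t) * (s * √s) / √x)
       * (Real.exp (-(y^(2*q) + y0^(2*q)) / (2*ξ^2*t*q^2)) * Real.exp (-k^2/(2*s)) * Real.exp x) := by
    rw [hs2]
    generalize √(2*π) = r at *
    rw [← h2p]
    have hy2 : Yb * τ ^ (-β) * δ * Real.exp (δ * v) = δ * y := by rw [hy]; ring
    rw [hy2]
    simp only [div_eq_mul_inv, mul_inv]; ring
  rw [e1, a1]
  have e2 : y * y ^ (3*q/2) = (Yb * τ ^ (-β)) ^ (3*q/2+1) * Real.exp ((3*q/2+1) * (δ * v)) := by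
    rw [← Real.rpow_one_add' hy0'.le (by positivity), hy, Real.mul_rpow (by positivity) (by positivity), ← Real.exp_mul]
    rw [add_comm, mul_comm (δ * v)]
  have e3 : Real.exp (-(y^(2*q) + y0^(2*q)) / (2*ξ^2*t*q^2)) * Real.exp (-k^2/(2*s)) * Real.exp x * Real.exp ((3*q/2+1) * (δ * v))
     = Real.exp (-(y0^(2*q)) / (2*ξ^2*t*q^2)) * Real.exp (-(k^2/(2*Yb) * (1 + 1/(2*q))) / δ^2 + (Yb * y0)^q / (ξ^2*t*q^2) / δ)
       * Real.exp (lapE (k^2/(2*Yb)) ((Yb * y0)^q / (ξ^2*t*q^2)) q (3*q/2+1) δ v) := by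
    simp only [← Real.exp_add]
    congr 1
    have f1 : s = Yb * δ^2 * Real.exp (δ * v) := by
      rw [hs, hy, pw_s Yb τ β q _ hτ, ← hδ]
    have f2 : x = (Yb * y0)^q / (ξ^2*t*q^2) * Real.exp (q * (δ * v)) / δ := by
      rw [hx, hy, pw_x t ξ y0 Yb τ β q _ hτ hY hy0 hβ, ← hδ]
    have f3 : y^(2*q) / (2*ξ^2*t*q^2) = k^2/(2*Yb)/(2*q) * Real.exp (2 * q * (δ * v)) / δ^2 := by
      rw [hy, pw_x2 _ Yb τ β q _ hτ hY hβ, ← hδ, hYb]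
    have f4 : -k^2/(2*s) = -(k^2/(2*Yb) * Real.exp (-(δ * v)) / δ^2) := by
      rw [f1, Real.exp_neg]; field_simp
    rw [f4, f2, neg_add, add_div, neg_div, f3]
    unfold lapE
    generalize (Yb * y0)^q / (ξ^2*t*q^2) = B
    generalize k^2/(2*Yb) = A
    generalize -y0^(2*q) / (2*ξ^2*t*q^2) = Q
    field_simp
    ring
  unfold bigN
  rw [← hδ]
  calc _ = δ * (Real.exp (k/2) / (2*π) / k^2) * (y0 ^ ((1-q)/2) / (ξ * √t) * τ ^ ((3:ℝ)/2)) * (y * y ^ (3*q/2))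
       * (Real.exp (-(y^(2*q) + y0^(2*q)) / (2*ξ^2*t*q^2)) * Real.exp (-k^2/(2*s)) * Real.exp x) := by ring
    _ = δ * (Real.exp (k/2) / (2*π) / k^2) * (y0 ^ ((1-q)/2) / (ξ * √t) * τ ^ ((3:ℝ)/2)) * (Yb * τ ^ (-β)) ^ (3*q/2+1)
       * (Real.exp (-(y^(2*q) + y0^(2*q)) / (2*ξ^2*t*q^2)) * Real.exp (-k^2/(2*s)) * Real.exp x * Real.exp ((3*q/2+1) * (δ * v))) := by
        rw [e2]; ring
    _ = _ := by rw [e3]; ring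

lemma const_id (t ξ y0 q k Yb β τ : ℝ) (ht : 0 < t) (hξ : 0 < ξ) (hy0 : 0 < y0) (hq : 0 < q) (hk : 0 < k)
    (hY : 0 < Yb) (hτ : 0 < τ) (hβ : β * (1 + 2 * q) = 1) (D1 D2 A B : ℝ)
    (hA : A = k^2/(2*Yb)) (hB : B = (Yb * y0)^q / (ξ^2*t*q^2))
    (hD1 : D1 = B * q / Yb) (hD2 : D2 = A * (1 + 2*q) / Yb^2) :
    bigN t ξ y0 q k Yb β τ * (√(2*π/(A*(1+2*q))) * Real.exp ((B*q)^2/(2*(A*(1+2*q))))) =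
    Real.exp (-(A * (1 + 1/(2*q))) * τ ^ (β - 1) + B * τ ^ ((β - 1)/2)) *
      (y0 ^ ((1-q)/2) * Yb ^ (3*q/2) * Real.exp (k/2 - y0^(2*q)/(2*ξ^2*t*q^2) + D1^2 / (2*D2)) / (k^2 * ξ * √(2*π*D2*t)))
      * τ ^ ((1 + 5 * q)/(2 + 4 * q)) := by
  have hA0 : 0 < A := by rw [hA]; positivity
  unfold bigN
  rw [← hA, ← hB]
  have e1 : D1^2/(2*D2) = (B*q)^2/(2*(A*(1+2*q))) := by
    rw [hD1, hD2]; field_simp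
  have e2 : Real.exp (k/2 - y0^(2*q)/(2*ξ^2*t*q^2) + (B*q)^2/(2*(A*(1+2*q)))) =
     Real.exp (k/2) * Real.exp (-(y0^(2*q)) / (2*ξ^2*t*q^2)) * Real.exp ((B*q)^2/(2*(A*(1+2*q)))) := by
    rw [← Real.exp_add, ← Real.exp_add]; congr 1; ring
  have e3 : -(A * (1 + 1/(2*q))) / (τ ^ ((1-β)/2))^2 + B / τ ^ ((1-β)/2) = -(A * (1 + 1/(2*q))) * τ ^ (β - 1) + B * τ ^ ((β - 1)/2) := by
    have g1 : τ ^ ((β - 1)/2) = (τ ^ ((1-β)/2))⁻¹ := by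
      rw [← Real.rpow_neg hτ.le]; congr 1; ring
    have g2 : τ ^ (β - 1) = ((τ ^ ((1-β)/2))^2)⁻¹ := by
      rw [← Real.rpow_natCast, ← Real.rpow_mul hτ.le, ← Real.rpow_neg hτ.le]; congr 1; push_cast; ring
    rw [g1, g2]; simp only [div_eq_mul_inv]
  have hH : 0 < A * (1 + 2*q) := by positivity
  generalize A * (1 + 2*q) = H at *
  have e4 : √(2*π*D2*t) = √(2*π) * √H / Yb * √t := by
    rw [hD2, show 2*π*(H/Yb^2)*t = (2*π) * H * t / Yb^2 by ring, Real.sqrt_div (by positivity), Real.sqrt_sq hY.le,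
      Real.sqrt_mul (by positivity), Real.sqrt_mul (by positivity)]
    ring
  have e5 : √(2*π/H) = √(2*π) / √H := Real.sqrt_div (by positivity) _
  have h2p : 2*π = √(2*π) * √(2*π) := (Real.mul_self_sqrt (by positivity)).symm
  have e6 : τ ^ ((3:ℝ)/2) * (τ ^ ((1-β)/2) * (Yb * τ ^ (-β)) ^ (3*q/2+1)) = Yb * Yb ^ (3*q/2) * τ ^ ((1 + 5 * q)/(2 + 4 * q)) := by
    rw [Real.mul_rpow hY.le (by positivity), Real.rpow_add hY, Real.rpow_one, ← Real.rpow_mul hτ.le]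
    have : τ ^ ((3:ℝ)/2) * τ ^ ((1-β)/2) * τ ^ (-β * (3*q/2+1)) = τ ^ ((1 + 5 * q)/(2 + 4 * q)) := by
      rw [← Real.rpow_add hτ, ← Real.rpow_add hτ]; congr 1
      have : β = 1/(1+2*q) := by field_simp; linarith
      rw [this]; field_simp; ring
    rw [← this]; ring
  rw [e1, e2, e3, e4, e5]
  have e7 : ∀ a1 a2 a3 a4 a5 a6 a7: ℝ, a1 / (2*π) / k^2 * a2 * (a3 / (ξ * √t) * τ ^ ((3:ℝ)/2)) * (τ ^ ((1-β)/2) * (Yb * τ ^ (-β)) ^ (3*q/2+1)) * a4 * (√(2*π) / √H * a5) 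
     = a1 / (2*π) / k^2 * a2 * (a3 / (ξ * √t)) * (Yb * Yb ^ (3*q/2) * τ ^ ((1 + 5 * q)/(2 + 4 * q))) * a4 * (√(2*π) / √H * a5) := by
    intros; rw [← e6]; ring
  rw [e7 _ _ _ _ _ 0 0]
  have : 0 < √H := by positivity
  have : 0 < √t := by positivity
  have hp : 0 < √(2*π) := by positivity
  generalize Real.exp (-(A * (1 + 1/(2*q))) * τ ^ (β - 1) + B * τ ^ ((β - 1)/2)) = E1
  generalize Real.exp ((B*q)^2/(2*H)) = E2
  generalize Real.exp (-(y0^(2*q)) / (2*ξ^2*t*q^2)) = E3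
  generalize τ ^ ((1 + 5 * q)/(2 + 4 * q)) = E4
  generalize Yb ^ (3*q/2) = E5
  generalize y0 ^ ((1-q)/2) = E6
  generalize √(2*π) = r at *
  rw [h2p]
  field_simp
lemma final_bound (t ξ y0 q k Yb β : ℝ) (ht : 0 < t) (hξ : 0 < ξ) (hy0 : 0 < y0) (hq : 0 < q) (hk : 0 < k)
    (hY : 0 < Yb) (hβ : β * (1 + 2 * q) = 1)
    (hYb : Yb ^ (2*q) / (2*ξ^2*t*q^2) = k^2/(2*Yb)/(2*q)) :
    ∃ C₀ > 0, ∀ τ ∈ Ioo (0:ℝ) 1,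
     |(∫ y in Ioi (0:ℝ), BS k y τ * (√y0 * y ^ ((1:ℝ)/2 - 2 * (1 - q)) / (q * ξ^2 * t) * Real.exp (-(y^(2*q) + y0^(2*q)) / (2*ξ^2*t*q^2))
       * besselI (1 / (2*q)) ((y0*y)^q / (q^2*ξ^2*t)))) /
      (bigN t ξ y0 q k Yb β τ * ∫ v, Real.exp (lapE0 (k^2/(2*Yb)) ((Yb * y0)^q / (ξ^2*t*q^2)) q v)) - 1| ≤ C₀ * τ ^ ((1-β)/2) := by
  obtain ⟨K, hK, hKb⟩ := model_bound k (1/(2*q)) hk (by positivity)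
  set B := (Yb * y0)^q / (ξ^2*t*q^2) with hB
  have hB0 : 0 < B := by positivity
  obtain ⟨C₀, hC, h⟩ := abstract_main (k^2/(2*Yb)) B q (3*q/2+1) (K/B) ((3/k^2+1/8)*Yb) (by positivity) hB0 hq (by positivity) (by positivity)
  refine ⟨C₀, hC, fun τ hτ => ?_⟩
  have hτ0 : 0 < τ := hτ.1
  have hβ0 : β = 1/(1+2*q) := by field_simp; linarith
  have hβ1 : 0 ≤ (1-β)/2 := by
    rw [show (1-β)/2 = β * q by linarith, hβ0]; positivity
  have hδ1 : τ ^ ((1-β)/2) ≤ 1 := Real.rpow_le_one hτ0.le hτ.2.le hβ1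
  have hN : 0 < bigN t ξ y0 q k Yb β τ := by unfold bigN; positivity
  obtain ⟨δ, hδ⟩ : ∃ δ, δ = τ ^ ((1-β)/2) := ⟨_, rfl⟩
  have hδ0 : 0 < δ := by rw [hδ]; positivity
  rw [← hδ] at hδ1 ⊢
  rw [cov (Yb * τ ^ (-β)) δ (by positivity) hδ0]
  refine h δ hδ0 hδ1 _ hN _ ?_ ?_
  · have hm : Measurable (fun v : ℝ => Yb * τ ^ (-β) * Real.exp (δ * v)) := by fun_prop
    have hbm := besselI_measurable_comp (1/(2*q)) (by positivity)
      (fun v : ℝ => (y0*(Yb * τ ^ (-β) * Real.exp (δ * v)))^q / (q^2*ξ^2*t)) (by fun_prop) (fun v => by positivity)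
    have hbs : Measurable (fun v : ℝ => BS k (Yb * τ ^ (-β) * Real.exp (δ * v)) τ) := by
      unfold BS
      have hP := Phi_continuous.measurable
      apply Measurable.sub
      · exact hP.comp (by fun_prop)
      · exact (hP.comp (by fun_prop)).const_mul _
    refine Measurable.mul (by fun_prop) (hbs.mul (Measurable.mul ?_ hbm))
    fun_prop
  · intro v
    obtain ⟨y, hy⟩ : ∃ y, y = Yb * τ ^ (-β) * Real.exp (δ * v) := ⟨_, rfl⟩
    obtain ⟨s, hs⟩ : ∃ s, s = y * τ := ⟨_, rfl⟩
    obtain ⟨x, hx⟩ : ∃ x, x = (y0*y)^q / (q^2*ξ^2*t) := ⟨_, rfl⟩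
    have hyp : 0 < y := by rw [hy]; positivity
    have hsp : 0 < s := by rw [hs]; positivity
    have hxp : 0 < x := by rw [hx]; positivity
    have hm := pw_main t ξ y0 q k Yb β τ v ht hξ hy0 hq hk hY hτ0 hβ hYb δ y s x hδ hy hs hx
    rw [← hB] at hm
    rw [← hm, ← hy, ← hx, show BS k y τ = bsd k s by rw [hs]; rfl]
    have hb := hKb s hsp x hxp
    have hPre : 0 < (Yb * τ ^ (-β)) * δ * Real.exp (δ * v) *
      (√y0 * y ^ ((1:ℝ)/2 - 2 * (1 - q)) / (q * ξ^2 * t) * Real.exp (-(y^(2*q) + y0^(2*q)) / (2*ξ^2*t*q^2))) := by positivity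
    have hM : 0 < Real.exp (k/2) / √(2*π) / k^2 * (s * √s * Real.exp (-k^2/(2*s))) * (Real.exp x / √(2*π*x)) := by positivity
    have herr : K / x + (3/k^2+1/8) * s ≤ δ * (K/B * Real.exp (-q * (δ * v)) + (3/k^2+1/8)*Yb * Real.exp (1 * (δ * v))) := by
      have f1 : s = Yb * δ^2 * Real.exp (δ * v) := by
        rw [hs, hy, pw_s Yb τ β q _ hτ0, ← hδ]
      have f2 : x = B * Real.exp (q * (δ * v)) / δ := by
        rw [hx, hy, pw_x t ξ y0 Yb τ β q _ hτ0 hY hy0 hβ, ← hδ]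
      have g1 : K / x = δ * (K/B * Real.exp (-q * (δ * v))) := by
        rw [f2, neg_mul, Real.exp_neg]; field_simp
      have g2 : (3/k^2+1/8) * s ≤ δ * ((3/k^2+1/8)*Yb * Real.exp (1 * (δ * v))) := by
        rw [f1, one_mul]
        have : 0 < (3/k^2+1/8)*Yb * Real.exp (δ * v) := by positivity
        have h2 : δ^2 ≤ δ := by nlinarith
        nlinarith [mul_le_mul_of_nonneg_left h2 this.le]
      rw [g1]; linarith
    generalize Real.exp (k/2) / √(2*π) / k^2 * (s * √s * Real.exp (-k^2/(2*s))) * (Real.exp x / √(2*π*x)) = M at *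
    generalize √y0 * y ^ ((1:ℝ)/2 - 2 * (1 - q)) / (q * ξ^2 * t) * Real.exp (-(y^(2*q) + y0^(2*q)) / (2*ξ^2*t*q^2)) = Z at *
    generalize (Yb * τ ^ (-β)) * δ * Real.exp (δ * v) = J at *
    generalize K / x + (3/k^2+1/8) * s = E at *
    rw [show J * (bsd k s * (Z * besselI (1/(2*q)) x)) - J * (Z * M) = J * Z * (bsd k s * besselI (1/(2*q)) x - M) by ring,
      abs_mul, abs_of_pos hPre]
    calc _ ≤ J * Z * (M * E) := mul_le_mul_of_nonneg_left hb hPre.le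
      _ = J * (Z * M) * E := by ring
      _ ≤ _ := mul_le_mul_of_nonneg_left herr (by rw [← mul_assoc]; positivity)
theorem stmt_9 (t ξ y0 p : ℝ) (ht : 0 < t) (hξ : 0 < ξ) (hy0 : 0 < y0) (hp : p < 1)
    (k : ℝ) (hk : 0 < k) :
    let βp : ℝ := 1 / (3 - 2 * p)
    let ybar : ℝ := (k ^ 2 * ξ ^ 2 * t * (1 - p) / 2) ^ βp
    let f0 : ℝ → ℝ := fun y => k ^ 2 / (2 * y) + y ^ (2 * (1 - p)) / (2 * ξ ^ 2 * t * (1 - p) ^ 2)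
    let f1 : ℝ → ℝ := fun y => (y * y0) ^ (1 - p) / (ξ ^ 2 * t * (1 - p) ^ 2)
    let c5 : ℝ := y0 ^ (p / 2) * ybar ^ (3 * (1 - p) / 2)
        * Real.exp (k / 2 - y0 ^ (2 * (1 - p)) / (2 * ξ ^ 2 * t * (1 - p) ^ 2)
            + (deriv f1 ybar) ^ 2 / (2 * deriv (deriv f0) ybar))
        / (k ^ 2 * ξ * Real.sqrt (2 * Real.pi * deriv (deriv f0) ybar * t))
    -- the absorbed CEV density (case `p < 1`)
    let ζ : ℝ → ℝ := fun z =>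
      Real.sqrt y0 * z ^ ((1 : ℝ) / 2 - 2 * p) / ((1 - p) * ξ ^ 2 * t)
        * Real.exp (-(z ^ (2 * (1 - p)) + y0 ^ (2 * (1 - p))) / (2 * ξ ^ 2 * t * (1 - p) ^ 2))
        * besselI (1 / (2 * (1 - p))) ((y0 * z) ^ (1 - p) / ((1 - p) ^ 2 * ξ ^ 2 * t))
    -- the call price
    let C : ℝ → ℝ := fun τ => ∫ y in Set.Ioi (0 : ℝ), BS k y τ * ζ y
    ∃ C₀ > (0 : ℝ), ∃ τ₀ > (0 : ℝ), ∀ τ ∈ Set.Ioo (0 : ℝ) τ₀,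
      |C τ / (Real.exp (-(f0 ybar) * τ ^ (βp - 1) + f1 ybar * τ ^ ((βp - 1) / 2))
          * c5 * τ ^ ((6 - 5 * p) / (6 - 4 * p))) - 1|
        ≤ C₀ * τ ^ ((1 - βp) / 2) := by

  intro βp ybar f0 f1 c5 ζ C
  obtain ⟨q, hqd⟩ : ∃ q, q = 1 - p := ⟨_, rfl⟩
  have hq : 0 < q := by rw [hqd]; linarith
  have hpq : p = 1 - q := by rw [hqd]; ring
  have hβ : βp * (1 + 2 * q) = 1 := by
    simp only [βp]; rw [hqd]
    have : 3 - 2 * p ≠ 0 := by linarith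
    field_simp; ring
  have hW : 0 < k ^ 2 * ξ ^ 2 * t * (1 - p) / 2 := by rw [← hqd]; positivity
  have hY : 0 < ybar := Real.rpow_pos_of_pos hW _
  have hYp : ybar ^ (2*q) * ybar = k^2*ξ^2*t*q/2 := by
    rw [← Real.rpow_add_one hY.ne']
    simp only [ybar]
    rw [← Real.rpow_mul hW.le, add_comm (2*q), hβ, Real.rpow_one, hqd]
  have hYb : ybar ^ (2*q) / (2*ξ^2*t*q^2) = k^2/(2*ybar)/(2*q) := by
    field_simp
    linear_combination 2 * hYp
  obtain ⟨C₀, hC, h⟩ := final_bound t ξ y0 q k ybar βp ht hξ hy0 hq hk hY hβ hYb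
  refine ⟨C₀, hC, 1, one_pos, fun τ hτ => ?_⟩
  have hb := h τ hτ
  have hCe : C τ = ∫ y in Ioi (0:ℝ), BS k y τ * (√y0 * y ^ ((1:ℝ)/2 - 2 * (1 - q)) / (q * ξ^2 * t) * Real.exp (-(y^(2*q) + y0^(2*q)) / (2*ξ^2*t*q^2))
       * besselI (1 / (2*q)) ((y0*y)^q / (q^2*ξ^2*t))) := by
    simp only [C, ζ]; rw [hpq]; simp only [sub_sub_cancel]
  have hD1 : deriv f1 ybar = (ybar * y0)^q / (ξ^2*t*q^2) * q / ybar := by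
    simp only [f1]; rw [f1_deriv y0 _ _ ybar hy0 hY, ← hqd]; ring
  have hD2 : deriv (deriv f0) ybar = k^2/(2*ybar) * (1 + 2*q) / ybar^2 := by
    simp only [f0]; rw [f0_deriv2 k _ _ ybar hY, ← hqd]
    have e : ybar ^ (2*q-2) = ybar ^ (2*q) / ybar^2 := by
      rw [Real.rpow_sub hY]; norm_num
    rw [e]
    have e2 : 2*q*(2*q-1)*(ybar ^ (2*q) / ybar^2)/(2*ξ^2*t*q^2) = 2*q*(2*q-1)/ybar^2 * (ybar ^ (2*q) / (2*ξ^2*t*q^2)) := by ring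
    rw [e2, hYb]
    field_simp; ring
  have hc := const_id t ξ y0 q k ybar βp τ ht hξ hy0 hq hk hY hτ.1 hβ _ _ _ _ rfl rfl hD1 hD2
  rw [lap0_int _ _ _ (by positivity) hq, hc, ← hCe] at hb
  have hf0 : f0 ybar = k^2/(2*ybar) * (1 + 1/(2*q)) := by
    simp only [f0]; rw [← hqd, hYb]; ring
  have hf1 : f1 ybar = (ybar * y0)^q / (ξ^2*t*q^2) := by
    simp only [f1]; rw [← hqd]
  have hc5 : c5 = y0 ^ ((1-q)/2) * ybar ^ (3*q/2) * Real.exp (k/2 - y0^(2*q)/(2*ξ^2*t*q^2) + (deriv f1 ybar)^2 / (2*deriv (deriv f0) ybar)) / (k^2 * ξ * √(2*π*deriv (deriv f0) ybar*t)) := by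
    simp only [c5]; rw [← hqd, ← hpq]
  rw [hf0, hf1, hc5, show (6 - 5 * p) / (6 - 4 * p) = (1 + 5 * q)/(2 + 4 * q) by rw [hpq]; congr 1 <;> ring]
  exact hb
end

section
/- Fix t > 0, ξ > 0, y₀ > 0 and k ≠ 0, and let C(k,τ) be the call price in the lognormal-variance model. Suppose σ : (0, τ₀) → (0,∞) satisfies BS(k, σ(τ)², τ) = C(k,τ) for all τ ∈ (0,τ₀) (the implied volatility). Then lim_{τ→0⁺} σ(τ)²·τ·(log τ)² / (k²·ξ²·t) = 1; that is, σ(τ)² ∼ k²ξ²t/(τ·(log τ)²) as τ → 0⁺. -/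
open MeasureTheory ProbabilityTheory Filter Topology

noncomputable def phi (x : ℝ) : ℝ := Real.exp (-(x ^ 2) / 2) / Real.sqrt (2 * Real.pi)

lemma phi_eq (x : ℝ) : phi x = gaussianPDFReal 0 1 x := by
  simp [phi, gaussianPDFReal, div_eq_mul_inv, mul_comm]

lemma phi_eq' : phi = gaussianPDFReal 0 1 := funext phi_eq

lemma phi_cont : Continuous phi := by
  unfold phi; fun_prop

lemma phi_pos (x : ℝ) : 0 < phi x := by
  unfold phi; positivity

lemma phi_int : Integrable phi := by
  rw [phi_eq']; exact integrable_gaussianPDFReal 0 1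

lemma Phi_def' (x : ℝ) : Phi x = ∫ s in Set.Iic x, phi s := rfl

lemma Phi_hasDeriv (x : ℝ) : HasDerivAt Phi (phi x) x := by
  have h : ∀ y, Phi y = Phi 0 + ∫ s in (0:ℝ)..y, phi s := by
    intro y
    rw [← intervalIntegral.integral_Iic_sub_Iic phi_int.integrableOn phi_int.integrableOn]
    simp [Phi_def']
  have h2 : Phi = fun y => Phi 0 + ∫ s in (0:ℝ)..y, phi s := funext h
  rw [h2]
  exact (intervalIntegral.integral_hasDerivAt_right (phi_int.intervalIntegrable)
    (phi_cont.stronglyMeasurableAtFilter _ _) phi_cont.continuousAt).const_add _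

lemma Phi_real (x : ℝ) : Phi x = (gaussianReal 0 1).real (Set.Iic x) := by
  rw [Phi_def', phi_eq', Measure.real, gaussianReal_apply_eq_integral _ one_ne_zero,
    ENNReal.toReal_ofReal]
  exact integral_nonneg fun s => gaussianPDFReal_nonneg _ _ _

lemma Phi_nonneg (x : ℝ) : 0 ≤ Phi x := by rw [Phi_real]; positivity

lemma Phi_le_one (x : ℝ) : Phi x ≤ 1 := by rw [Phi_real]; exact measureReal_le_one

lemma Phi_tail (x : ℝ) (hx : x ≤ 0) : Phi x ≤ Real.exp (-x ^ 2 / 2) := by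
  have := measure_le_le_exp_mul_mgf (μ := gaussianReal 0 1) (X := id) (t := x) x hx
    (integrable_exp_mul_gaussianReal x)
  rw [mgf_id_gaussianReal] at this
  rw [Phi_real]
  refine this.trans_eq ?_
  rw [← Real.exp_add]
  congr 1
  push_cast
  ring

lemma Phi_neg (x : ℝ) : Phi (-x) = 1 - Phi x := by
  have h1 : Phi (-x) = ∫ s in Set.Ioi x, phi s := by
    have := integral_comp_neg_Iic (-x) phi
    rw [neg_neg] at this
    rw [← this, Phi_def']
    congr 1; ext s; simp [phi]
  have h2 := intervalIntegral.integral_Iic_add_Ioi (b := x) phi_int.integrableOn phi_int.integrableOn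
  have h3 : ∫ s, phi s = 1 := by
    rw [phi_eq']; exact integral_gaussianPDFReal_eq_one 0 one_ne_zero
  rw [h1, Phi_def']; linarith

/-- BS as a function of total standard deviation -/
noncomputable def G (k s : ℝ) : ℝ := Phi (-k / s + s / 2) - Real.exp k * Phi (-k / s - s / 2)

lemma BS_eq (k w T : ℝ) : BS k w T = G k (Real.sqrt (w * T)) := rfl

lemma G_symm (k s : ℝ) : G k s - (1 - Real.exp k) = Real.exp k * G (-k) s := by
  unfold G
  have e1 : -k / s + s / 2 = -(-(-k) / s - s / 2) := by ring
  have e2 : -k / s - s / 2 = -(-(-k) / s + s / 2) := by ring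
  have e3 : Real.exp k * Real.exp (-k) = 1 := by rw [← Real.exp_add]; simp
  rw [e1, e2, Phi_neg, Phi_neg]
  linear_combination Phi (-(-k) / s - s / 2) * e3

lemma phi_rel (k s : ℝ) (hs : s ≠ 0) :
    Real.exp k * phi (-k / s - s / 2) = phi (-k / s + s / 2) := by
  unfold phi
  rw [← mul_div_assoc, ← Real.exp_add]
  congr 2
  field_simp
  ring

lemma G_hasDeriv (k s : ℝ) (hs : s ≠ 0) : HasDerivAt (G k) (phi (-k / s + s / 2)) s := by
  have hd : HasDerivAt (fun s : ℝ => -k / s) (k / s ^ 2) s := by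
    have := (hasDerivAt_inv hs).const_mul (-k)
    refine (this.congr_deriv ?_)
    field_simp
  have hh : HasDerivAt (fun s : ℝ => s / 2) (1 / 2) s := (hasDerivAt_id s).div_const 2
  have h1 := (Phi_hasDeriv (-k / s + s / 2)).comp s (hd.add hh)
  have h2 := ((Phi_hasDeriv (-k / s - s / 2)).comp s (hd.sub hh)).const_mul (Real.exp k)
  refine (h1.sub h2).congr_deriv ?_
  rw [← mul_assoc, phi_rel k s hs]
  ring

lemma G_strictMono (k : ℝ) : StrictMonoOn (G k) (Set.Ioi 0) := by
  apply strictMonoOn_of_deriv_pos (convex_Ioi 0)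
  · intro s hs
    exact (G_hasDeriv k s (ne_of_gt hs)).continuousAt.continuousWithinAt
  · intro s hs
    rw [interior_Ioi] at hs
    rw [(G_hasDeriv k s (ne_of_gt hs)).deriv]
    exact phi_pos _

lemma G_nonneg (k s : ℝ) (hk : 0 < k) (hs : 0 < s) : 0 ≤ G k s := by
  have hlow : ∀ᶠ u in 𝓝[>] (0:ℝ), - (Real.exp k * Real.exp (-(k / u) ^ 2 / 2)) ≤ G k s := by
    filter_upwards [Ioo_mem_nhdsGT hs] with u hu
    have hu0 : 0 < u := hu.1
    refine le_trans ?_ ((G_strictMono k).monotoneOn hu0 hs hu.2.le)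
    unfold G
    have h1 := Phi_nonneg (-k / u + u / 2)
    have hku : 0 < k / u := by positivity
    have e : -k / u - u / 2 = -(k / u + u / 2) := by ring
    have h2 := Phi_tail (-k / u - u / 2) (by rw [e]; linarith)
    have h3 : Real.exp (-(-k / u - u / 2) ^ 2 / 2) ≤ Real.exp (-(k / u) ^ 2 / 2) := by
      apply Real.exp_le_exp.2
      rw [e]; nlinarith
    nlinarith [Real.exp_pos k]
  have hl : Tendsto (fun u : ℝ => - (Real.exp k * Real.exp (-(k / u) ^ 2 / 2))) (𝓝[>] 0) (𝓝 0) := by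
    have h1 : Tendsto (fun u : ℝ => k / u) (𝓝[>] 0) atTop := by
      simpa [div_eq_mul_inv] using (tendsto_inv_nhdsGT_zero).const_mul_atTop hk
    have h2 : Tendsto (fun u : ℝ => -(k / u) ^ 2 / 2) (𝓝[>] 0) atBot := by
      have := ((tendsto_pow_atTop (two_ne_zero)).comp h1).atTop_div_const (zero_lt_two)
      refine (tendsto_neg_atTop_atBot.comp this).congr ?_
      intro u; simp; ring
    have h3 := ((Real.tendsto_exp_atBot.comp h2).const_mul (Real.exp k)).neg
    simpa using h3
  exact le_of_tendsto hl hlow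

lemma G_pos (k s : ℝ) (hk : 0 < k) (hs : 0 < s) : 0 < G k s :=
  (G_nonneg k (s/2) hk (by positivity)).trans_lt
    (G_strictMono k (by simp [hs] : s/2 ∈ Set.Ioi (0:ℝ)) hs (by linarith))

lemma G_le_one (k s : ℝ) : G k s ≤ 1 := by
  unfold G
  nlinarith [Phi_le_one (-k / s + s / 2), Phi_nonneg (-k / s - s / 2), Real.exp_pos k,
    mul_nonneg (Real.exp_pos k).le (Phi_nonneg (-k / s - s / 2))]

lemma G_upper (k s : ℝ) (hk : 0 < k) (hs : 0 < s) :
    G k s ≤ Real.exp (k / 2 - k ^ 2 / (2 * s ^ 2)) := by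
  rcases le_total (s ^ 2) (2 * k) with h | h
  · have h0 : -k / s + s / 2 ≤ 0 := by
      rw [div_add_div _ _ hs.ne' two_ne_zero]
      apply div_nonpos_of_nonpos_of_nonneg <;> nlinarith
    have h1 := Phi_tail _ h0
    have h2 : G k s ≤ Phi (-k / s + s / 2) := by
      unfold G
      linarith [mul_nonneg (Real.exp_pos k).le (Phi_nonneg (-k / s - s / 2))]
    refine h2.trans (h1.trans (Real.exp_le_exp.2 ?_))
    have : -(-k / s + s / 2) ^ 2 / 2 = k / 2 - k ^ 2 / (2 * s ^ 2) - s ^ 2 / 8 := by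
      field_simp; ring
    rw [this]; nlinarith
  · refine (G_le_one k s).trans (Real.one_le_exp ?_)
    rw [sub_nonneg, div_le_div_iff₀ (by positivity) (by positivity)]
    nlinarith

lemma G_lower (k s : ℝ) (hk : 0 < k) (hs : 0 < s) (hs1 : s < 1) :
    s ^ 2 / Real.sqrt (2 * Real.pi) * Real.exp (k / 2 - k ^ 2 / (2 * s ^ 2 * (1 - s) ^ 2) - s ^ 2 / 8)
      ≤ G k s := by
  have hlt : s * (1 - s) < s := by nlinarith
  have hpos : 0 < s * (1 - s) := by have : 0 < 1 - s := by linarith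
                                    positivity
  obtain ⟨c, hc, hcd⟩ := exists_hasDerivAt_eq_slope (G k) (fun s => phi (-k / s + s / 2)) hlt
    (fun x hx => (G_hasDeriv k x (by linarith [hx.1])).continuousAt.continuousWithinAt)
    (fun x hx => G_hasDeriv k x (by linarith [hx.1]))
  have hc0 : 0 < c := hpos.trans hc.1
  have hne : s - s * (1 - s) = s ^ 2 := by ring
  rw [hne, eq_div_iff (by positivity)] at hcd
  have hn := G_nonneg k _ hk hpos
  have h1 : Real.exp (k / 2 - k ^ 2 / (2 * s ^ 2 * (1 - s) ^ 2) - s ^ 2 / 8) ≤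
      Real.exp (-((-k / c + c / 2) ^ 2) / 2) := by
    apply Real.exp_le_exp.2
    have : -((-k / c + c / 2) ^ 2) / 2 = k / 2 - k ^ 2 / (2 * c ^ 2) - c ^ 2 / 8 := by
      field_simp; ring
    rw [this]
    have a1 : c ^ 2 ≤ s ^ 2 := by apply pow_le_pow_left₀ hc0.le hc.2.le
    have a2 : k ^ 2 / (2 * c ^ 2) ≤ k ^ 2 / (2 * s ^ 2 * (1 - s) ^ 2) := by
      have : (s * (1 - s)) ^ 2 ≤ c ^ 2 := pow_le_pow_left₀ hpos.le hc.1.le 2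
      apply div_le_div_of_nonneg_left (by positivity)
      · have : 0 < 1 - s := by linarith
        positivity
      · nlinarith
    linarith
  have h2 : G k s ≥ phi (-k / c + c / 2) * s ^ 2 := by linarith
  refine le_trans ?_ h2
  unfold phi
  rw [div_mul_eq_mul_div, div_mul_eq_mul_div, mul_comm]
  gcongr

lemma cov_s12 (g : ℝ → ℝ) (t ξ μ0 : ℝ) (ht : 0 < t) (hξ : 0 < ξ) :
    ∫ y in Set.Ioi (0 : ℝ), g y * ((y * ξ * Real.sqrt (2 * Real.pi * t))⁻¹
        * Real.exp (-(Real.log y - μ0) ^ 2 / (2 * ξ ^ 2 * t))) =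
    ∫ u, g (Real.exp u) ∂(gaussianReal μ0 (ξ ^ 2 * t).toNNReal) := by
  have hs : 0 < ξ ^ 2 * t := by positivity
  have hs' : (ξ ^ 2 * t).toNNReal ≠ 0 := by simpa using hs
  rw [integral_gaussianReal_eq_integral_smul hs']
  have h := integral_image_eq_integral_abs_deriv_smul (s := Set.univ) (f := Real.exp)
    (f' := Real.exp) MeasurableSet.univ (fun x _ => (Real.hasDerivAt_exp x).hasDerivWithinAt)
    Real.exp_injective.injOn (fun y => g y * ((y * ξ * Real.sqrt (2 * Real.pi * t))⁻¹
        * Real.exp (-(Real.log y - μ0) ^ 2 / (2 * ξ ^ 2 * t))))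
  rw [Set.image_univ, Real.range_exp] at h
  rw [h, Measure.restrict_univ]
  congr 1; ext u
  have e1 : Real.sqrt (2 * Real.pi * (ξ ^ 2 * t)) = ξ * Real.sqrt (2 * Real.pi * t) := by
    rw [show 2 * Real.pi * (ξ ^ 2 * t) = ξ ^ 2 * (2 * Real.pi * t) by ring,
      Real.sqrt_mul (by positivity), Real.sqrt_sq hξ.le]
  rw [gaussianPDFReal, Real.coe_toNNReal _ hs.le, e1, Real.log_exp, abs_of_pos (Real.exp_pos u),
    smul_eq_mul, smul_eq_mul, ← mul_assoc 2]
  have := Real.exp_pos u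
  have : 0 < Real.sqrt (2 * Real.pi * t) := by positivity
  field_simp

noncomputable def CC (k μ0 s τ : ℝ) : ℝ :=
  ∫ u, G k (Real.sqrt (Real.exp u * τ)) ∂(gaussianReal μ0 s.toNNReal)

lemma CC_upper (k μ0 s τ : ℝ) (hk : 0 < k) (hs : 0 < s) (hτ : 0 < τ) (hτ1 : τ < 1) :
    CC k μ0 s τ ≤ Real.exp (k / 2 + (-Real.log τ / s) * (Real.log (2 * (-Real.log τ / s) / k ^ 2) + μ0)
      - (Real.log τ) ^ 2 / (2 * s)) := by
  set L := -Real.log τ with hL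
  have hL0 : 0 < L := by have := Real.log_neg hτ hτ1; linarith
  set p := L / s with hp
  have hp0 : 0 < p := by positivity
  have hb : ∀ u : ℝ, G k (Real.sqrt (Real.exp u * τ)) ≤
      Real.exp (k / 2 + p * (Real.log (2 * p / k ^ 2) - L)) * Real.exp (p * u) := by
    intro u
    have hv : 0 < Real.exp u * τ := by positivity
    refine (G_upper k _ hk (Real.sqrt_pos.2 hv)).trans ?_
    rw [Real.sq_sqrt hv.le, ← Real.exp_add]
    apply Real.exp_le_exp.2
    have h1 := Real.log_le_sub_one_of_pos (x := k ^ 2 / (2 * p * (Real.exp u * τ))) (by positivity)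
    have h2 : Real.log (k ^ 2 / (2 * p * (Real.exp u * τ))) = -Real.log (2 * p / k ^ 2) - u + L := by
      rw [show k ^ 2 / (2 * p * (Real.exp u * τ)) = (2 * p / k ^ 2)⁻¹ * (Real.exp u)⁻¹ * τ⁻¹ by
        field_simp]
      rw [Real.log_mul (by positivity) (by positivity), Real.log_mul (by positivity) (by positivity),
        Real.log_inv, Real.log_inv, Real.log_inv, Real.log_exp, hL]
      ring
    rw [h2] at h1
    have h3 : k ^ 2 / (2 * (Real.exp u * τ)) = p * (k ^ 2 / (2 * p * (Real.exp u * τ))) := by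
      field_simp
    rw [h3]
    nlinarith
  have hm := integral_mono_of_nonneg (μ := gaussianReal μ0 s.toNNReal)
    (f := fun u => G k (Real.sqrt (Real.exp u * τ)))
    (Eventually.of_forall fun u => G_nonneg k _ hk (Real.sqrt_pos.2 (by positivity)))
    ((integrable_exp_mul_gaussianReal p).const_mul
      (Real.exp (k / 2 + p * (Real.log (2 * p / k ^ 2) - L)))) (Eventually.of_forall hb)
  have hmgf : ∫ u, Real.exp (p * u) ∂(gaussianReal μ0 s.toNNReal)
      = Real.exp (μ0 * p + s * p ^ 2 / 2) := by
    have := congrFun (mgf_id_gaussianReal (μ := μ0) (v := s.toNNReal)) p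
    rw [Real.coe_toNNReal _ hs.le] at this
    exact this
  rw [integral_const_mul, hmgf, ← Real.exp_add] at hm
  refine hm.trans_eq ?_
  congr 1
  have : Real.log τ ^ 2 = L ^ 2 := by rw [hL]; ring
  rw [this]
  have hLp : L = p * s := by rw [hp]; field_simp
  rw [hLp]; field_simp; ring

lemma gauss_lower (μ0 s L : ℝ) (hs : 0 < s) (hL : μ0 ≤ L) :
    (Real.sqrt (2 * Real.pi * s))⁻¹ * Real.exp (-(L + 1 - μ0) ^ 2 / (2 * s)) ≤
      (gaussianReal μ0 s.toNNReal).real (Set.Icc L (L + 1)) := by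
  have hs' : s.toNNReal ≠ 0 := by simpa using hs
  rw [Measure.real, gaussianReal_apply_eq_integral _ hs', ENNReal.toReal_ofReal
    (integral_nonneg fun s => gaussianPDFReal_nonneg _ _ _)]
  have h := setIntegral_ge_of_const_le_real (μ := volume) (s := Set.Icc L (L + 1))
    (f := gaussianPDFReal μ0 s.toNNReal)
    (c := (Real.sqrt (2 * Real.pi * s))⁻¹ * Real.exp (-(L + 1 - μ0) ^ 2 / (2 * s)))
    measurableSet_Icc (by simp) ?_ (integrable_gaussianPDFReal _ _).integrableOn
  · simpa using h
  · intro x hx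
    rw [gaussianPDFReal, Real.coe_toNNReal _ hs.le]
    gcongr
    · linarith [hx.1]
    · exact hx.2

lemma CC_lower (k μ0 s τ : ℝ) (hk : 0 < k) (hs : 0 < s) (hτ : 0 < τ) (hL : μ0 ≤ -Real.log τ) :
    G k 1 * ((Real.sqrt (2 * Real.pi * s))⁻¹ *
      Real.exp (-(-Real.log τ + 1 - μ0) ^ 2 / (2 * s))) ≤ CC k μ0 s τ := by
  set L := -Real.log τ with hLd
  have hpos : ∀ u : ℝ, 0 < Real.sqrt (Real.exp u * τ) := fun u => Real.sqrt_pos.2 (by positivity)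
  have hcont : Continuous (fun u : ℝ => G k (Real.sqrt (Real.exp u * τ))) := by
    rw [continuous_iff_continuousAt]
    intro u
    exact ContinuousAt.comp (f := fun u : ℝ => Real.sqrt (Real.exp u * τ)) (g := G k)
      (G_hasDeriv k _ (hpos u).ne').continuousAt (by fun_prop)
  have hint : Integrable (fun u : ℝ => G k (Real.sqrt (Real.exp u * τ)))
      (gaussianReal μ0 s.toNNReal) := by
    refine Integrable.of_bound hcont.aestronglyMeasurable 1 (Eventually.of_forall fun u => ?_)
    rw [Real.norm_eq_abs, abs_of_nonneg (G_nonneg k _ hk (hpos u))]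
    exact G_le_one _ _
  have h1 : ∫ u in Set.Icc L (L + 1), G k (Real.sqrt (Real.exp u * τ))
      ∂(gaussianReal μ0 s.toNNReal) ≤ CC k μ0 s τ :=
    setIntegral_le_integral hint (Eventually.of_forall fun u => G_nonneg k _ hk (hpos u))
  have h2 := setIntegral_ge_of_const_le_real (μ := gaussianReal μ0 s.toNNReal)
    (s := Set.Icc L (L + 1)) (f := fun u : ℝ => G k (Real.sqrt (Real.exp u * τ)))
    (c := G k 1) measurableSet_Icc (by simp) ?_ hint.integrableOn
  · refine le_trans ?_ (h2.trans h1)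
    exact mul_le_mul_of_nonneg_left (gauss_lower μ0 s L hs hL) (G_pos k 1 hk one_pos).le
  · intro u hu
    apply (G_strictMono k).monotoneOn (Set.mem_Ioi.2 one_pos) (hpos u)
    rw [Real.one_le_sqrt]
    have : Real.exp L ≤ Real.exp u := Real.exp_le_exp.2 hu.1
    have h3 : Real.exp L * τ = 1 := by
      rw [hLd, Real.exp_neg, Real.exp_log hτ]; field_simp
    nlinarith

noncomputable def AA (k μ0 s L : ℝ) : ℝ :=
  k / 2 + (L / s) * (Real.log (2 * (L / s) / k ^ 2) + μ0) - L ^ 2 / (2 * s)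

lemma inv_lim : Tendsto (fun L : ℝ => L⁻¹) atTop (𝓝 0) := tendsto_inv_atTop_zero

lemma AA_lim (k μ0 s : ℝ) (hk : 0 < k) (hs : 0 < s) :
    Tendsto (fun L => -AA k μ0 s L * (2 * s) / L ^ 2) atTop (𝓝 1) := by
  have hlog : Tendsto (fun L : ℝ => Real.log L * L⁻¹) atTop (𝓝 0) := by
    have := Real.isLittleO_log_id_atTop.tendsto_div_nhds_zero
    simpa [div_eq_mul_inv] using this
  have h : Tendsto (fun L : ℝ => 1 - s * k * (L⁻¹ * L⁻¹) - 2 * (Real.log L * L⁻¹)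
      - 2 * (Real.log (2 / (s * k ^ 2)) + μ0) * L⁻¹) atTop
      (𝓝 (1 - s * k * (0 * 0) - 2 * 0 - 2 * (Real.log (2 / (s * k ^ 2)) + μ0) * 0)) :=
    ((tendsto_const_nhds.sub ((inv_lim.mul inv_lim).const_mul _)).sub (hlog.const_mul _)).sub
      (inv_lim.const_mul _)
  simp only [mul_zero, sub_zero] at h
  refine h.congr' ?_
  filter_upwards [eventually_gt_atTop 0] with L hL
  have : Real.log (2 * (L / s) / k ^ 2) = Real.log (2 / (s * k ^ 2)) + Real.log L := by
    rw [← Real.log_mul (by positivity) (by positivity)]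
    congr 1; field_simp
  rw [AA, this]
  field_simp
  ring

noncomputable def hh (k r : ℝ) : ℝ :=
  k ^ 2 / (2 * (1 - r) ^ 2) + r ^ 4 / 8 - r ^ 2 * k / 2
    - r ^ 2 * Real.log (r ^ 2 / Real.sqrt (2 * Real.pi))

lemma hh_lim (k : ℝ) : Tendsto (hh k) (𝓝[>] 0) (𝓝 (k ^ 2 / 2)) := by
  have h1 : Tendsto (fun r : ℝ => k ^ 2 / (2 * (1 - r) ^ 2) + r ^ 4 / 8 - r ^ 2 * k / 2)
      (𝓝[>] 0) (𝓝 (k ^ 2 / 2)) := by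
    have : ContinuousAt (fun r : ℝ => k ^ 2 / (2 * (1 - r) ^ 2) + r ^ 4 / 8 - r ^ 2 * k / 2) 0 := by
      refine ContinuousAt.sub (ContinuousAt.add (ContinuousAt.div ?_ ?_ ?_) ?_) ?_
      · fun_prop
      · fun_prop
      · norm_num
      · fun_prop
      · fun_prop
    have h := this.tendsto.mono_left (nhdsWithin_le_nhds (s := Set.Ioi 0))
    simpa using h
  have h2 : Tendsto (fun r : ℝ => r ^ 2 * Real.log (r ^ 2 / Real.sqrt (2 * Real.pi)))
      (𝓝[>] 0) (𝓝 0) := by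
    have hc : Continuous (fun x : ℝ => x * Real.log x) := Real.continuous_mul_log
    have hc2 : Continuous (fun r : ℝ => Real.sqrt (2 * Real.pi) *
        ((r ^ 2 / Real.sqrt (2 * Real.pi)) * Real.log (r ^ 2 / Real.sqrt (2 * Real.pi)))) :=
      continuous_const.mul (hc.comp (by fun_prop : Continuous fun r : ℝ => r ^ 2 / Real.sqrt (2 * Real.pi)))
    have h := (hc2.tendsto 0).mono_left (nhdsWithin_le_nhds (s := Set.Ioi 0))
    simp only [ne_eq, OfNat.ofNat_ne_zero, not_false_eq_true, zero_pow, zero_div, zero_mul,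
      mul_zero] at h
    refine h.congr fun r => ?_
    have : 0 < Real.sqrt (2 * Real.pi) := by positivity
    field_simp
  have h3 := h1.sub h2
  rw [sub_zero] at h3
  exact h3

lemma BB_lim (a b : ℝ) : Tendsto (fun L : ℝ => L ^ 2 / ((L + a) ^ 2 + b)) atTop (𝓝 1) := by
  have h : Tendsto (fun L : ℝ => ((1 + a * L⁻¹) ^ 2 + b * (L⁻¹ * L⁻¹))⁻¹) atTop
      (𝓝 (((1 + a * 0) ^ 2 + b * (0 * 0))⁻¹)) := by
    refine Tendsto.inv₀ ?_ (by norm_num)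
    exact ((tendsto_const_nhds.add (inv_lim.const_mul _)).pow 2).add
      ((inv_lim.mul inv_lim).const_mul _)
  have e : ((1 + a * 0) ^ 2 + b * (0 * 0) : ℝ)⁻¹ = 1 := by norm_num
  rw [e] at h
  refine h.congr' ?_
  filter_upwards [eventually_gt_atTop 0] with L hL
  have : (L + a) ^ 2 + b = L ^ 2 * ((1 + a * L⁻¹) ^ 2 + b * (L⁻¹ * L⁻¹)) := by field_simp
  rw [this, div_mul_eq_div_div, div_self (by positivity), one_div]

lemma L_lim : Tendsto (fun τ : ℝ => -Real.log τ) (𝓝[>] 0) atTop :=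
  tendsto_neg_atBot_atTop.comp Real.tendsto_log_nhdsGT_zero

lemma core (k μ0 s : ℝ) (hk : 0 < k) (hs : 0 < s) (r : ℝ → ℝ)
    (hr : ∀ᶠ τ in 𝓝[>] (0:ℝ), 0 < r τ ∧ G k (r τ) = CC k μ0 s τ) :
    Tendsto (fun τ => r τ ^ 2 * (Real.log τ) ^ 2 / (k ^ 2 * s)) (𝓝[>] 0) (𝓝 1) := by
  have hτ : ∀ᶠ τ in 𝓝[>] (0:ℝ), τ ∈ Set.Ioo (0:ℝ) 1 := Ioo_mem_nhdsGT one_pos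
  have hup : ∀ᶠ τ in 𝓝[>] (0:ℝ), CC k μ0 s τ ≤ Real.exp (AA k μ0 s (-Real.log τ)) := by
    filter_upwards [hτ] with τ h
    have := CC_upper k μ0 s τ hk hs h.1 h.2
    unfold AA
    rwa [neg_sq]
  have ha := (AA_lim k μ0 s hk hs).comp L_lim
  have hA : Tendsto (fun τ => AA k μ0 s (-Real.log τ)) (𝓝[>] 0) atBot := by
    have h1 : Tendsto (fun L : ℝ => L ^ 2 / (2 * s)) atTop atTop :=
      (tendsto_pow_atTop two_ne_zero).atTop_div_const (by positivity)
    have h2 := tendsto_neg_atTop_atBot.comp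
      ((AA_lim k μ0 s hk hs).pos_mul_atTop one_pos h1)
    have h3 : Tendsto (AA k μ0 s) atTop atBot := by
      refine h2.congr' ?_
      filter_upwards [eventually_gt_atTop 0] with L hL
      simp only [Function.comp]
      field_simp
    exact h3.comp L_lim
  have hr0 : Tendsto r (𝓝[>] 0) (𝓝[>] 0) := by
    rw [tendsto_nhdsWithin_iff]
    refine ⟨?_, hr.mono fun τ h => h.1⟩
    rw [Metric.tendsto_nhds]
    intro δ hδ
    have h1 : ∀ᶠ τ in 𝓝[>] (0:ℝ), Real.exp (AA k μ0 s (-Real.log τ)) < G k δ :=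
      (Real.tendsto_exp_atBot.comp hA).eventually (gt_mem_nhds (G_pos k δ hk hδ))
    filter_upwards [h1, hup, hr] with τ h1 h2 h3
    rw [Real.dist_eq, sub_zero, abs_of_pos h3.1]
    by_contra hcon
    have := (G_strictMono k).monotoneOn (Set.mem_Ioi.2 hδ) (Set.mem_Ioi.2 h3.1) (not_lt.1 hcon)
    linarith [h3.2]
  have hr1 : ∀ᶠ τ in 𝓝[>] (0:ℝ), r τ < 1 :=
    (tendsto_nhdsWithin_iff.1 hr0).1.eventually (gt_mem_nhds one_pos)
  set c := G k 1 * (Real.sqrt (2 * Real.pi * s))⁻¹ with hc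
  have hc0 : 0 < c := mul_pos (G_pos k 1 hk one_pos) (by positivity)
  have hlowlim := (BB_lim (1 - μ0) (2 * s * (k / 2 - Real.log c))).comp L_lim
  have huplim : Tendsto (fun τ => hh k (r τ) * (2 / k ^ 2) /
      (-AA k μ0 s (-Real.log τ) * (2 * s) / (-Real.log τ) ^ 2)) (𝓝[>] 0) (𝓝 1) := by
    have := (((hh_lim k).comp hr0).mul_const (2 / k ^ 2)).div ha one_ne_zero
    have e : k ^ 2 / 2 * (2 / k ^ 2) / 1 = 1 := by field_simp
    rw [e] at this
    exact this
  refine tendsto_of_tendsto_of_tendsto_of_le_of_le' hlowlim huplim ?_ ?_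
  · filter_upwards [hτ, hr, L_lim.eventually_ge_atTop μ0] with τ h1 h2 h3
    have h4 := CC_lower k μ0 s τ hk hs h1.1 h3
    rw [← mul_assoc, ← hc, ← h2.2] at h4
    have h5 := h4.trans (G_upper k _ hk h2.1)
    rw [← Real.exp_log hc0, ← Real.exp_add, Real.exp_le_exp] at h5
    simp only [Function.comp]
    set L := -Real.log τ with hL
    have hL2 : Real.log τ ^ 2 = L ^ 2 := by rw [hL]; ring
    rw [hL2]
    have hrp := h2.1
    have h6 : k ^ 2 * s / r τ ^ 2 ≤ (L + (1 - μ0)) ^ 2 + 2 * s * (k / 2 - Real.log c) := by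
      have e1 : -(L + 1 - μ0) ^ 2 / (2 * s) * (2 * s) = -(L + (1 - μ0)) ^ 2 := by
        field_simp; ring
      have e2 : k ^ 2 / (2 * r τ ^ 2) * (2 * s) = k ^ 2 * s / r τ ^ 2 := by
        field_simp
      have := mul_le_mul_of_nonneg_right h5 (by positivity : 0 ≤ 2 * s)
      linarith
    have h7 : 0 < k ^ 2 * s / r τ ^ 2 := by positivity
    calc L ^ 2 / ((L + (1 - μ0)) ^ 2 + 2 * s * (k / 2 - Real.log c))
        ≤ L ^ 2 / (k ^ 2 * s / r τ ^ 2) := by gcongr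
      _ = r τ ^ 2 * L ^ 2 / (k ^ 2 * s) := by field_simp
  · filter_upwards [hτ, hr, hup, hr1, ha.eventually (lt_mem_nhds one_pos)] with τ h1 h2 h3 h4 h5
    simp only [Function.comp] at h5
    have hrp := h2.1
    have h6 := (G_lower k _ hk h2.1 h4).trans (h2.2.le.trans h3)
    have hL0 : 0 < -Real.log τ := by have := Real.log_neg h1.1 h1.2; linarith
    have hL2 : Real.log τ ^ 2 = (-Real.log τ) ^ 2 := by ring
    rw [hL2]
    set L := -Real.log τ with hL
    have hq : 0 < r τ ^ 2 / Real.sqrt (2 * Real.pi) := by positivity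
    rw [← Real.exp_log hq, ← Real.exp_add, Real.exp_le_exp] at h6
    have h1r : 0 < 1 - r τ := by linarith
    have h7 : r τ ^ 2 * -AA k μ0 s L ≤ hh k (r τ) := by
      have := mul_le_mul_of_nonneg_left h6 (by positivity : 0 ≤ r τ ^ 2)
      have e : r τ ^ 2 * (k ^ 2 / (2 * r τ ^ 2 * (1 - r τ) ^ 2)) = k ^ 2 / (2 * (1 - r τ) ^ 2) := by
        field_simp
      unfold hh
      nlinarith
    rw [le_div_iff₀ h5]
    calc r τ ^ 2 * L ^ 2 / (k ^ 2 * s) * (-AA k μ0 s L * (2 * s) / L ^ 2)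
        = (r τ ^ 2 * -AA k μ0 s L) * (2 / k ^ 2) := by field_simp
      _ ≤ _ := by gcongr

theorem stmt_12 (t ξ y0 : ℝ) (ht : 0 < t) (hξ : 0 < ξ) (hy0 : 0 < y0)
    (k : ℝ) (hk : k ≠ 0) :
    let μ0 : ℝ := Real.log y0 - ξ ^ 2 * t / 2
    -- the lognormal density (case `p = 1`)
    let ζ1 : ℝ → ℝ := fun y =>
      (y * ξ * Real.sqrt (2 * Real.pi * t))⁻¹
        * Real.exp (-(Real.log y - μ0) ^ 2 / (2 * ξ ^ 2 * t))
    -- the call price (via put–call parity for negative log-moneyness)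
    let C : ℝ → ℝ := fun τ =>
      if k < 0 then
        1 - Real.exp k + ∫ y in Set.Ioi (0 : ℝ), (BS k y τ - (1 - Real.exp k)) * ζ1 y
      else ∫ y in Set.Ioi (0 : ℝ), BS k y τ * ζ1 y
    ∀ τ₀ > (0 : ℝ), ∀ σ : ℝ → ℝ,
      (∀ τ ∈ Set.Ioo (0 : ℝ) τ₀, 0 < σ τ ∧ BS k (σ τ ^ 2) τ = C τ) →
      Filter.Tendsto (fun τ => σ τ ^ 2 * τ * (Real.log τ) ^ 2 / (k ^ 2 * ξ ^ 2 * t))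
        (nhdsWithin 0 (Set.Ioi 0)) (nhds 1) := by
  intro μ0 ζ1 C τ₀ hτ₀ σ hσ
  have hs : 0 < ξ ^ 2 * t := by positivity
  have hC : ∀ g : ℝ → ℝ, ∫ y in Set.Ioi (0 : ℝ), g y * ζ1 y =
      ∫ u, g (Real.exp u) ∂(gaussianReal μ0 (ξ ^ 2 * t).toNNReal) :=
    fun g => cov_s12 g t ξ μ0 ht hξ
  have key : ∀ᶠ τ in 𝓝[>] (0:ℝ), 0 < Real.sqrt (σ τ ^ 2 * τ) ∧
      G |k| (Real.sqrt (σ τ ^ 2 * τ)) = CC |k| μ0 (ξ ^ 2 * t) τ := by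
    filter_upwards [Ioo_mem_nhdsGT hτ₀] with τ hτ
    obtain ⟨h1, h2⟩ := hσ τ hτ
    have hτ0 : 0 < τ := hτ.1
    refine ⟨Real.sqrt_pos.2 (by positivity), ?_⟩
    rw [BS_eq] at h2
    simp only [C] at h2
    split_ifs at h2 with hk0
    · rw [hC (fun y => BS k y τ - (1 - Real.exp k))] at h2
      simp only [BS_eq, G_symm] at h2
      rw [integral_const_mul] at h2
      have h3 := G_symm k (Real.sqrt (σ τ ^ 2 * τ))
      rw [abs_of_neg hk0]
      have h4 : Real.exp k * G (-k) (Real.sqrt (σ τ ^ 2 * τ)) =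
          Real.exp k * CC (-k) μ0 (ξ ^ 2 * t) τ := by
        unfold CC; linarith
      exact mul_left_cancel₀ (Real.exp_pos k).ne' h4
    · rw [hC (fun y => BS k y τ)] at h2
      rw [abs_of_nonneg (not_lt.1 hk0)]
      exact h2
  have h := core |k| μ0 (ξ ^ 2 * t) (abs_pos.2 hk) hs (fun τ => Real.sqrt (σ τ ^ 2 * τ)) key
  refine h.congr' ?_
  filter_upwards [self_mem_nhdsWithin] with τ hτ
  have hτ0 : (0:ℝ) < τ := hτ
  rw [Real.sq_sqrt (by positivity), sq_abs, mul_assoc (k ^ 2)]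
end
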